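/- Let Ω ⊆ ℝ³ be open with the origin O on its boundary, let α > −1, and assume (QPD). If the Wiener integral diverges, i.e. ∫_0^1 cap(B̄_ρ ∖ Ω) ρ^{−2} dρ = ∞, then O is regular with respect to the Lamé system: for every f ∈ C_0^∞(Ω;ℝ³) and every u ∈ H̊¹(Ω;ℝ³) with Lu = f on Ω, one has u(x) → 0 as x → O with x ∈ Ω. -/

import Mathlib

/-!
Since `f` vanishes near the origin, `Lu = 0` in `Ω ∩ B_{2ρ}` for small `ρ`. Let `η` be a cut-off
equal to `1` on `B_ρ` and supported in `B_{2ρ}`, and apply (QPD) to `η u` with pole `y ∈ Ω`,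
`|y| < ρ / 2`. Only commutator terms supported where `Dη ≠ 0` survive; there `Φ(x - y)` is of size
`1/ρ` and its gradient of size `1/ρ²`, so `|u(y)|²` and `c₀ ∫ |Du|² |x - y|⁻¹` are at most
`C ∫_{Ω ∩ B_{2ρ}} (ρ⁻³ |u|² + ρ⁻¹ |Du|²)`. As (QPD) speaks of test fields, this is carried out for
test fields that approximate `u` in `H¹` and coincide with `u` near `y`.

Letting `y → 0` gives `∫ |Du|² |x|⁻¹ < ∞` near the origin. A capacitary Poincaré inequality absorbs
the term `ρ⁻³ |u|²` and gives `cap(B̄_ρ ∖ Ω) |u(y)|² ≤ C ∫_{Ω ∩ B_{2ρ}} |Du|²` for `|y| < ρ / 2`. If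
`|u|² ≥ ε` at points arbitrarily close to the origin, then
`cap(B̄_ρ ∖ Ω) ≤ (C / ε) ∫_{Ω ∩ B_{2ρ}} |Du|²` for all small `ρ`; dividing by `ρ²` and integrating,
Tonelli's theorem bounds the Wiener integral by a multiple of `∫ |Du|² |x|⁻¹ < ∞`.
-/

open MeasureTheory Metric Real Filter

noncomputable section

/-- `ℝ³` as Euclidean space. -/
abbrev E3 : Type := EuclideanSpace ℝ (Fin 3)

/-- Partial derivative `∂ᵢ f` on `ℝ³`. -/
def pd (i : Fin 3) (f : E3 → ℝ) (x : E3) : ℝ :=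
  fderiv ℝ f x (EuclideanSpace.single i 1)

/-- Laplacian on `ℝ³`. -/
def lap (f : E3 → ℝ) (x : E3) : ℝ := ∑ i, pd i (pd i f) x

/-- Divergence of a vector field on `ℝ³`. -/
def divg (u : E3 → Fin 3 → ℝ) (x : E3) : ℝ := ∑ k, pd k (fun y => u y k) x

/-- The 3D Lamé operator `(Lu)ᵢ = -Δuᵢ - α ∂ᵢ (div u)`. -/
def lame (α : ℝ) (u : E3 → Fin 3 → ℝ) (x : E3) (i : Fin 3) : ℝ :=
  - lap (fun y => u y i) x - α * pd i (divg u) x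

/-- The constant `c_α = (α+2)/(8π(α+1))`. -/
def cA (α : ℝ) : ℝ := (α + 2) / (8 * Real.pi * (α + 1))

/-- The fundamental matrix `Φ` of the 3D Lamé system:
`Φ_ij(x) = c_α |x|⁻¹ (δ_ij + (α/(α+2)) xᵢxⱼ/|x|²)`. -/
def Phi (α : ℝ) (x : E3) (i j : Fin 3) : ℝ :=
  cA α * ‖x‖⁻¹ * ((if i = j then (1 : ℝ) else 0) + (α / (α + 2)) * (x i * x j) / ‖x‖ ^ 2)

/-- `u ∈ C₀^∞(U; ℝ³)`: smooth, compactly supported, with support inside `U`. -/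
def IsTestOn (U : Set E3) (u : E3 → Fin 3 → ℝ) : Prop :=
  ContDiff ℝ (⊤ : ℕ∞) u ∧ HasCompactSupport u ∧ tsupport u ⊆ U

/-- `∫_{ℝ³} (Lu)·(Φ(·-y) u) dx`. -/
def lameEnergy (α : ℝ) (u : E3 → Fin 3 → ℝ) (y : E3) : ℝ :=
  ∫ x : E3, ∑ i, ∑ j, lame α u x i * Phi α (x - y) i j * u x j

/-- (QPD): quantitative weighted positive definiteness of the Lamé system with weight `Φ`,
with constant `c₀`. -/
def QPDhyp (α c₀ : ℝ) : Prop :=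
  ∀ u : E3 → Fin 3 → ℝ, IsTestOn Set.univ u → ∀ y : E3,
    (1 / 2) * (∑ i, (u y i) ^ 2) +
      c₀ * ∫ x : E3, (∑ i, ∑ k, (pd k (fun z => u z i) x) ^ 2) * ‖x - y‖⁻¹ ≤
    lameEnergy α u y

/-- `u ∈ H̊¹(Ω; ℝ³)`: `u` is smooth on `Ω`, `∫_Ω (|u|² + |Du|²) < ∞`, and `u` is
approximated in this norm by test fields supported in `Ω`. -/
def MemH10 (Ω : Set E3) (u : E3 → Fin 3 → ℝ) : Prop :=
  ContDiffOn ℝ (⊤ : ℕ∞) u Ω ∧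
  IntegrableOn (fun x => (∑ i, (u x i) ^ 2) +
    ∑ i, ∑ k, (pd k (fun z => u z i) x) ^ 2) Ω volume ∧
  ∃ un : ℕ → E3 → Fin 3 → ℝ, (∀ n, IsTestOn Ω (un n)) ∧
    Tendsto (fun n => ∫ x in Ω, ((∑ i, (u x i - un n x i) ^ 2) +
      ∑ i, ∑ k, (pd k (fun z => u z i - un n z i) x) ^ 2)) atTop (nhds 0)

/-- `m_ρ(u) = ρ⁻³ ∫_{Ω ∩ S_ρ} |u|² dx`, where `S_ρ = {ρ < |x| < 2ρ}`. -/
def mRho (Ω : Set E3) (ρ : ℝ) (u : E3 → Fin 3 → ℝ) : ℝ :=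
  (ρ ^ 3)⁻¹ * ∫ x in Ω ∩ {x : E3 | ρ < ‖x‖ ∧ ‖x‖ < 2 * ρ}, ∑ i, (u x i) ^ 2

/-- `M_ρ(u) = ρ⁻³ ∫_{Ω ∩ B_ρ} |u|² dx`. -/
def MRho (Ω : Set E3) (ρ : ℝ) (u : E3 → Fin 3 → ℝ) : ℝ :=
  (ρ ^ 3)⁻¹ * ∫ x in Ω ∩ ball (0 : E3) ρ, ∑ i, (u x i) ^ 2

/-- The classical harmonic capacity of a set `K ⊆ ℝ³`:
`cap K = inf { ∫ |Df|² : f ∈ C₀^∞(ℝ³), f = 1 on a neighborhood of K }`. -/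
def capa (K : Set E3) : ℝ :=
  sInf {t : ℝ | ∃ f : E3 → ℝ, ContDiff ℝ (⊤ : ℕ∞) f ∧ HasCompactSupport f ∧
    (∃ U : Set E3, IsOpen U ∧ K ⊆ U ∧ ∀ x ∈ U, f x = 1) ∧
    t = ∫ x : E3, ∑ i, (pd i f x) ^ 2}

open scoped ContDiff Matrix

/-! ### Quadratic forms on vectors and matrices -/

section QuadraticForms

variable {ι κ τ : Type*} [Fintype ι] [Fintype κ] [Fintype τ]

/-- The squared Euclidean length of a coordinate vector; the norm of `ι → ℝ` is the sup norm. -/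
def sqSum (v : ι → ℝ) : ℝ := ∑ i, v i ^ 2

/-- The squared Frobenius norm of a matrix. -/
def frobSq (A : Matrix ι κ ℝ) : ℝ := ∑ i, ∑ k, A i k ^ 2

lemma sqSum_nonneg (v : ι → ℝ) : 0 ≤ sqSum v :=
  Finset.sum_nonneg fun _ _ => sq_nonneg _

lemma frobSq_nonneg (A : Matrix ι κ ℝ) : 0 ≤ frobSq A :=
  Finset.sum_nonneg fun i _ => sqSum_nonneg (A i)

@[fun_prop]
lemma continuous_sqSum : Continuous (sqSum : (ι → ℝ) → ℝ) := by
  unfold sqSum; fun_prop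

@[fun_prop]
lemma continuous_frobSq : Continuous (frobSq : Matrix ι κ ℝ → ℝ) := by
  unfold frobSq; fun_prop

@[simp]
lemma sqSum_zero : sqSum (0 : ι → ℝ) = 0 := by simp [sqSum]

@[simp]
lemma frobSq_zero : frobSq (0 : Matrix ι κ ℝ) = 0 := by simp [frobSq]

lemma sq_le_sqSum (v : ι → ℝ) (i : ι) : v i ^ 2 ≤ sqSum v :=
  Finset.single_le_sum (f := fun i => v i ^ 2) (fun _ _ => sq_nonneg _) (Finset.mem_univ i)

lemma sqSum_smul (c : ℝ) (v : ι → ℝ) : sqSum (c • v) = c ^ 2 * sqSum v := by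
  simp [sqSum, mul_pow, Finset.mul_sum]

lemma frobSq_smul (c : ℝ) (A : Matrix ι κ ℝ) : frobSq (c • A) = c ^ 2 * frobSq A := by
  simp [frobSq, mul_pow, Finset.mul_sum]

lemma sqSum_add_le (v w : ι → ℝ) : sqSum (v + w) ≤ 2 * (sqSum v + sqSum w) := by
  simp only [sqSum, Pi.add_apply, ← Finset.sum_add_distrib, Finset.mul_sum]
  exact Finset.sum_le_sum fun i _ => add_sq_le

lemma frobSq_add_le (A B : Matrix ι κ ℝ) : frobSq (A + B) ≤ 2 * (frobSq A + frobSq B) := by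
  rw [frobSq, frobSq, frobSq, ← Finset.sum_add_distrib, Finset.mul_sum]
  exact Finset.sum_le_sum fun i _ => sqSum_add_le (A i) (B i)

lemma sqSum_neg (v : ι → ℝ) : sqSum (-v) = sqSum v := by simp [sqSum]

lemma frobSq_neg (A : Matrix ι κ ℝ) : frobSq (-A) = frobSq A := by simp [frobSq]

lemma sqSum_sub_le (v w : ι → ℝ) : sqSum (v - w) ≤ 2 * (sqSum v + sqSum w) := by
  simpa only [sub_eq_add_neg, sqSum_neg] using sqSum_add_le v (-w)

lemma frobSq_sub_le (A B : Matrix ι κ ℝ) : frobSq (A - B) ≤ 2 * (frobSq A + frobSq B) := by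
  simpa only [sub_eq_add_neg, frobSq_neg] using frobSq_add_le A (-B)

lemma frobSq_vecMulVec (v : ι → ℝ) (w : κ → ℝ) :
    frobSq (Matrix.vecMulVec v w) = sqSum v * sqSum w := by
  simp [frobSq, sqSum, Matrix.vecMulVec_apply, mul_pow, Finset.sum_mul_sum]

lemma dotProduct_sq_le (v w : ι → ℝ) : (v ⬝ᵥ w) ^ 2 ≤ sqSum v * sqSum w :=
  Finset.sum_mul_sq_le_sq_mul_sq _ _ _

lemma sqSum_mulVec_le (A : Matrix ι κ ℝ) (v : κ → ℝ) :
    sqSum (A *ᵥ v) ≤ frobSq A * sqSum v := by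
  rw [frobSq, Finset.sum_mul]
  exact Finset.sum_le_sum fun i _ => dotProduct_sq_le (A i) v

lemma sqSum_vecMul_le (v : ι → ℝ) (A : Matrix ι κ ℝ) :
    sqSum (v ᵥ* A) ≤ sqSum v * frobSq A := by
  rw [frobSq, Finset.sum_comm, Finset.mul_sum]
  exact Finset.sum_le_sum fun k _ => dotProduct_sq_le v (A · k)

lemma frobSq_mul_le (A : Matrix ι κ ℝ) (B : Matrix κ τ ℝ) :
    frobSq (A * B) ≤ frobSq A * frobSq B := by
  rw [frobSq, frobSq, Finset.sum_mul]
  exact Finset.sum_le_sum fun i _ => sqSum_vecMul_le (A i) B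

lemma sq_trace_le (A : Matrix ι ι ℝ) : A.trace ^ 2 ≤ Fintype.card ι * frobSq A := by
  refine sq_sum_le_card_mul_sum_sq.trans ?_
  rw [Finset.card_univ]
  exact mul_le_mul_of_nonneg_left (Finset.sum_le_sum fun i _ => sq_le_sqSum (A i) i)
    (Nat.cast_nonneg _)

end QuadraticForms

/-! ### The bilinear form of the Lamé operator -/

section LameForm

variable {ι : Type*} [Fintype ι] {α : ℝ}

/-- The bilinear form `P : Q + α tr P tr Q` of the Lamé operator, acting on the Jacobian matrices
of two vector fields. -/
def lameForm (α : ℝ) (P Q : Matrix ι ι ℝ) : ℝ :=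
  ∑ i, ∑ k, P i k * Q i k + α * (P.trace * Q.trace)

lemma lameForm_comm (P Q : Matrix ι ι ℝ) : lameForm α P Q = lameForm α Q P := by
  simp only [lameForm, mul_comm]

lemma lameForm_add_left (P P' Q : Matrix ι ι ℝ) :
    lameForm α (P + P') Q = lameForm α P Q + lameForm α P' Q := by
  simp only [lameForm, Matrix.add_apply, Matrix.trace_add, add_mul, Finset.sum_add_distrib]
  ring

lemma lameForm_smul_left (c : ℝ) (P Q : Matrix ι ι ℝ) :
    lameForm α (c • P) Q = c * lameForm α P Q := by
  simp only [lameForm, Matrix.smul_apply, Matrix.trace_smul, smul_eq_mul, mul_assoc,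
    ← Finset.mul_sum]
  ring

lemma lameForm_add_right (P Q Q' : Matrix ι ι ℝ) :
    lameForm α P (Q + Q') = lameForm α P Q + lameForm α P Q' := by
  simp only [lameForm_comm P, lameForm_add_left]

lemma lameForm_smul_right (c : ℝ) (P Q : Matrix ι ι ℝ) :
    lameForm α P (c • Q) = c * lameForm α P Q := by
  simp only [lameForm_comm P, lameForm_smul_left]

lemma lameForm_sub_left (P P' Q : Matrix ι ι ℝ) :
    lameForm α (P - P') Q = lameForm α P Q - lameForm α P' Q := by
  rw [sub_eq_add_neg, ← neg_one_smul ℝ P', lameForm_add_left, lameForm_smul_left]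
  ring

@[simp]
lemma lameForm_zero_left (Q : Matrix ι ι ℝ) : lameForm α 0 Q = 0 := by simp [lameForm]

@[simp]
lemma lameForm_zero_right (P : Matrix ι ι ℝ) : lameForm α P 0 = 0 := by simp [lameForm]

lemma two_mul_abs_mul_le (a b : ℝ) {t : ℝ} (ht : 0 < t) :
    2 * |a * b| ≤ t * a ^ 2 + t⁻¹ * b ^ 2 := by
  simpa [abs_mul, mul_assoc] using two_mul_le_add_mul_sq (a := |a|) (b := |b|) ht

lemma two_mul_abs_sum_sum_mul_le {κ : Type*} [Fintype κ] (P Q : Matrix ι κ ℝ) {t : ℝ} (ht : 0 < t) :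
    2 * |∑ i, ∑ k, P i k * Q i k| ≤ t * frobSq P + t⁻¹ * frobSq Q := by
  calc 2 * |∑ i, ∑ k, P i k * Q i k| ≤ 2 * ∑ i, ∑ k, |P i k * Q i k| := by
        gcongr
        exact (Finset.abs_sum_le_sum_abs _ _).trans
          (Finset.sum_le_sum fun i _ => Finset.abs_sum_le_sum_abs _ _)
    _ ≤ ∑ i, ∑ k, (t * P i k ^ 2 + t⁻¹ * Q i k ^ 2) := by
        simp only [Finset.mul_sum]
        gcongr
        exact two_mul_abs_mul_le _ _ ht
    _ = t * frobSq P + t⁻¹ * frobSq Q := by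
        simp only [frobSq, Finset.sum_add_distrib, Finset.mul_sum]

lemma two_mul_abs_lameForm_le (P Q : Matrix ι ι ℝ) {t : ℝ} (ht : 0 < t) :
    2 * |lameForm α P Q| ≤
      (1 + |α| * Fintype.card ι) * (t * frobSq P + t⁻¹ * frobSq Q) := by
  have h_trace : 2 * |P.trace * Q.trace| ≤
      Fintype.card ι * (t * frobSq P + t⁻¹ * frobSq Q) := by
    calc 2 * |P.trace * Q.trace| ≤ t * P.trace ^ 2 + t⁻¹ * Q.trace ^ 2 :=
          two_mul_abs_mul_le _ _ ht
      _ ≤ t * (Fintype.card ι * frobSq P) + t⁻¹ * (Fintype.card ι * frobSq Q) := by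
          gcongr <;> exact sq_trace_le _
      _ = _ := by ring
  calc 2 * |lameForm α P Q|
      ≤ 2 * (|∑ i, ∑ k, P i k * Q i k| + |α * (P.trace * Q.trace)|) := by
        gcongr
        exact abs_add_le _ _
    _ = 2 * |∑ i, ∑ k, P i k * Q i k| + |α| * (2 * |P.trace * Q.trace|) := by
        rw [abs_mul α]; ring
    _ ≤ (t * frobSq P + t⁻¹ * frobSq Q)
          + |α| * (Fintype.card ι * (t * frobSq P + t⁻¹ * frobSq Q)) := by
        gcongr
        exact two_mul_abs_sum_sum_mul_le P Q ht
    _ = _ := by ring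

lemma two_mul_abs_lameForm_le_of_le {P Q : Matrix (Fin 3) (Fin 3) ℝ} {p q t : ℝ} (ht : 0 < t)
    (hP : frobSq P ≤ p) (hQ : frobSq Q ≤ q) :
    2 * |lameForm α P Q| ≤ (1 + |α| * 3) * (t * p + t⁻¹ * q) := by
  refine (two_mul_abs_lameForm_le P Q ht).trans ?_
  rw [Fintype.card_fin, Nat.cast_ofNat]
  gcongr

end LameForm

/-! ### Gradients and Jacobian matrices -/

section Derivatives

variable {f g η : E3 → ℝ} {u v w : E3 → Fin 3 → ℝ} {T : E3 → Fin 3 → Fin 3 → ℝ} {x : E3}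

/-- The gradient of a scalar function, as a coordinate vector. -/
def grad (f : E3 → ℝ) (x : E3) : Fin 3 → ℝ := fun k => pd k f x

/-- The Jacobian matrix `(∂ₖ uᵢ)ᵢₖ` of a vector field. -/
def jac (u : E3 → Fin 3 → ℝ) (x : E3) : Matrix (Fin 3) (Fin 3) ℝ :=
  fun i => grad (fun z => u z i) x

/-- The squared length of all first derivatives of a matrix field. -/
def derivSq (T : E3 → Fin 3 → Fin 3 → ℝ) (x : E3) : ℝ := ∑ i, frobSq (jac (fun z => T z i) x)

lemma derivSq_nonneg (T : E3 → Fin 3 → Fin 3 → ℝ) (x : E3) : 0 ≤ derivSq T x :=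
  Finset.sum_nonneg fun _ _ => frobSq_nonneg _

lemma grad_congr (h : f =ᶠ[nhds x] g) : grad f x = grad g x := by
  funext k
  rw [grad, grad, pd, pd, h.fderiv_eq]

lemma jac_congr (h : u =ᶠ[nhds x] v) : jac u x = jac v x := by
  funext i
  exact grad_congr (h.mono fun z hz => congrFun hz i)

lemma derivSq_congr {S : E3 → Fin 3 → Fin 3 → ℝ} (h : S =ᶠ[nhds x] T) :
    derivSq S x = derivSq T x :=
  Finset.sum_congr rfl fun i _ => by rw [jac_congr (h.mono fun z hz => congrFun hz i)]

@[simp]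
lemma grad_const (c : ℝ) (x : E3) : grad (fun _ => c) x = 0 := by
  funext k
  simp [grad, pd]

lemma grad_eq_zero (hx : x ∉ tsupport f) : grad f x = 0 := by
  rw [grad_congr (notMem_tsupport_iff_eventuallyEq.mp hx)]
  exact grad_const 0 x

lemma jac_eq_zero (hx : x ∉ tsupport u) : jac u x = 0 := by
  rw [jac_congr (notMem_tsupport_iff_eventuallyEq.mp hx)]
  funext _
  exact grad_const 0 x

lemma grad_sub (hf : DifferentiableAt ℝ f x) (hg : DifferentiableAt ℝ g x) :
    grad (fun z => f z - g z) x = grad f x - grad g x := by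
  funext k
  simp [grad, pd, fderiv_fun_sub hf hg]

lemma grad_const_sub (c : ℝ) (f : E3 → ℝ) (x : E3) : grad (fun z => c - f z) x = -grad f x := by
  funext k
  simp [grad, pd, fderiv_const_sub]

lemma grad_mul (hf : DifferentiableAt ℝ f x) (hg : DifferentiableAt ℝ g x) :
    grad (fun z => f z * g z) x = f x • grad g x + g x • grad f x := by
  funext k
  simp [grad, pd, fderiv_fun_mul hf hg]

lemma grad_sum {ι : Type*} {s : Finset ι} {F : ι → E3 → ℝ}
    (hF : ∀ j ∈ s, DifferentiableAt ℝ (F j) x) :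
    grad (fun z => ∑ j ∈ s, F j z) x = ∑ j ∈ s, grad (F j) x := by
  funext k
  simp [grad, pd, fderiv_fun_sum hF]

lemma grad_comp_smul (f : E3 → ℝ) (c : ℝ) (x : E3) :
    grad (fun z => f (c • z)) x = c • grad f (c • x) := by
  funext k
  simp [grad, pd, fderiv_comp_smul]

lemma grad_comp_sub_right (f : E3 → ℝ) (a x : E3) :
    grad (fun z => f (z - a)) x = grad f (x - a) := by
  funext k
  simp [grad, pd, fderiv_comp_sub]

lemma jac_sub (hu : DifferentiableAt ℝ u x) (hv : DifferentiableAt ℝ v x) :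
    jac (u - v) x = jac u x - jac v x := by
  funext i
  exact grad_sub (differentiableAt_pi.mp hu i) (differentiableAt_pi.mp hv i)

lemma jac_smul (hη : DifferentiableAt ℝ η x) (hw : DifferentiableAt ℝ w x) :
    jac (fun z => η z • w z) x = η x • jac w x + Matrix.vecMulVec (w x) (grad η x) := by
  funext i
  exact grad_mul hη (differentiableAt_pi.mp hw i)

lemma jac_const_smul (c : ℝ) (hw : DifferentiableAt ℝ w x) :
    jac (fun z => c • w z) x = c • jac w x := by
  rw [jac_smul (differentiableAt_const c) hw, grad_const, Matrix.vecMulVec_zero, add_zero]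

lemma derivSq_comp_smul (T : E3 → Fin 3 → Fin 3 → ℝ) (c : ℝ) (x : E3) :
    derivSq (fun z => T (c • z)) x = c ^ 2 * derivSq T (c • x) := by
  have h_jac (i : Fin 3) : jac (fun z => T (c • z) i) x = c • jac (fun z => T z i) (c • x) := by
    funext j
    exact grad_comp_smul (fun z => T z i j) c x
  simp only [derivSq, h_jac, frobSq_smul, Finset.mul_sum]

lemma derivSq_const_smul (c : ℝ) (hT : DifferentiableAt ℝ T x) :
    derivSq (fun z => c • T z) x = c ^ 2 * derivSq T x := by
  have h_jac (i : Fin 3) : jac (fun z => (c • T z) i) x = c • jac (fun z => T z i) x :=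
    jac_const_smul c (differentiableAt_pi.mp hT i)
  simp only [derivSq, h_jac, frobSq_smul, Finset.mul_sum]

lemma derivSq_comp_sub_right (T : E3 → Fin 3 → Fin 3 → ℝ) (a x : E3) :
    derivSq (fun z => T (z - a)) x = derivSq T (x - a) := by
  have h_jac (i : Fin 3) : jac (fun z => T (z - a) i) x = jac (fun z => T z i) (x - a) := by
    funext j
    exact grad_comp_sub_right (fun z => T z i j) a x
  simp only [derivSq, h_jac]

lemma differentiableAt_mulVec (hT : DifferentiableAt ℝ T x) (hw : DifferentiableAt ℝ w x) :
    DifferentiableAt ℝ (fun z => T z *ᵥ w z) x :=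
  differentiableAt_pi.mpr fun i =>
    DifferentiableAt.fun_sum (A := fun j z => T z i j * w z j) (u := Finset.univ) fun j _ =>
      (differentiableAt_pi.mp (differentiableAt_pi.mp hT i) j).mul (differentiableAt_pi.mp hw j)

lemma jac_mulVec (hT : DifferentiableAt ℝ T x) (hw : DifferentiableAt ℝ w x) :
    jac (fun z => T z *ᵥ w z) x =
      Matrix.of (fun i => w x ᵥ* jac (fun z => T z i) x) + Matrix.of (T x) * jac w x := by
  have hT' (i j) : DifferentiableAt ℝ (fun z => T z i j) x :=
    differentiableAt_pi.mp (differentiableAt_pi.mp hT i) j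
  have hw' (j) : DifferentiableAt ℝ (fun z => w z j) x := differentiableAt_pi.mp hw j
  have h_row (i) : jac (fun z => T z *ᵥ w z) x i = ∑ j, grad (fun z => T z i j * w z j) x :=
    grad_sum (F := fun j z => T z i j * w z j) (s := Finset.univ)
      fun j _ => (hT' i j).mul (hw' j)
  ext i k
  simp only [h_row, grad_mul (hT' _ _) (hw' _), Finset.sum_apply, Pi.add_apply,
    Pi.smul_apply, smul_eq_mul, Finset.sum_add_distrib, Matrix.add_apply, Matrix.of_apply,
    Matrix.vecMul, Matrix.mul_apply, dotProduct]
  exact add_comm _ _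

lemma frobSq_jac_smul_le (hη : DifferentiableAt ℝ η x) (hw : DifferentiableAt ℝ w x) :
    frobSq (jac (fun z => η z • w z) x) ≤
      2 * (η x ^ 2 * frobSq (jac w x) + sqSum (grad η x) * sqSum (w x)) := by
  rw [jac_smul hη hw, mul_comm (sqSum _), ← frobSq_smul, ← frobSq_vecMulVec]
  exact frobSq_add_le _ _

lemma frobSq_jac_mulVec_le (hT : DifferentiableAt ℝ T x) (hw : DifferentiableAt ℝ w x) :
    frobSq (jac (fun z => T z *ᵥ w z) x) ≤
      2 * (derivSq T x * sqSum (w x) + frobSq (T x) * frobSq (jac w x)) := by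
  rw [jac_mulVec hT hw]
  refine (frobSq_add_le _ _).trans ?_
  gcongr
  · rw [derivSq, mul_comm, Finset.mul_sum]
    exact Finset.sum_le_sum fun i _ => sqSum_vecMul_le (w x) (jac (fun z => T z i) x)
  · exact frobSq_mul_le _ _

lemma contDiffAt_pd (hf : ContDiffAt ℝ ∞ f x) (k : Fin 3) : ContDiffAt ℝ ∞ (pd k f) x :=
  (hf.fderiv_right (by norm_cast) : ContDiffAt ℝ ∞ (fderiv ℝ f) x).clm_apply contDiffAt_const

lemma contDiffAt_grad (hf : ContDiffAt ℝ ∞ f x) : ContDiffAt ℝ ∞ (grad f) x :=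
  contDiffAt_pi.mpr (contDiffAt_pd hf)

lemma contDiffAt_jac (hu : ContDiffAt ℝ ∞ u x) (i k : Fin 3) :
    ContDiffAt ℝ ∞ (fun z => jac u z i k) x :=
  contDiffAt_pd (contDiffAt_pi.mp hu i) k

lemma continuousAt_jac (hu : ContDiffAt ℝ ∞ u x) : ContinuousAt (jac u) x :=
  continuousAt_pi.mpr fun i => (contDiffAt_grad (contDiffAt_pi.mp hu i)).continuousAt

lemma continuous_grad (hf : ContDiff ℝ ∞ f) : Continuous (grad f) :=
  continuous_iff_continuousAt.mpr fun _ => (contDiffAt_grad hf.contDiffAt).continuousAt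

lemma continuous_jac (hu : ContDiff ℝ ∞ u) : Continuous (jac u) :=
  continuous_iff_continuousAt.mpr fun _ => continuousAt_jac hu.contDiffAt

lemma continuousAt_derivSq (hT : ContDiffAt ℝ ∞ T x) : ContinuousAt (derivSq T) x :=
  tendsto_finsetSum _ fun i _ =>
    (continuous_frobSq.continuousAt.comp (continuousAt_jac (contDiffAt_pi.mp hT i)) :)

lemma continuous_derivSq (hT : ContDiff ℝ ∞ T) : Continuous (derivSq T) :=
  continuous_iff_continuousAt.mpr fun _ => continuousAt_derivSq hT.contDiffAt

end Derivatives

/-! ### Test fields -/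

section TestFields

variable {U : Set E3} {f g η : E3 → ℝ} {u v w : E3 → Fin 3 → ℝ} {T : E3 → Fin 3 → Fin 3 → ℝ}
  {x : E3}

lemma contDiff_mulVec (hT : ContDiff ℝ ∞ T) (hw : ContDiff ℝ ∞ w) :
    ContDiff ℝ ∞ fun z => T z *ᵥ w z :=
  contDiff_pi.mpr fun i => ContDiff.sum (f := fun j z => T z i j * w z j) (s := Finset.univ)
    fun j _ => (contDiff_pi.mp (contDiff_pi.mp hT i) j).mul (contDiff_pi.mp hw j)

lemma contDiff_smul_of_tsupport (hη : ContDiff ℝ ∞ η)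
    (hu : ∀ x ∈ tsupport η, ContDiffAt ℝ ∞ u x) : ContDiff ℝ ∞ fun z => η z • u z :=
  contDiff_iff_contDiffAt.mpr fun x => by
    by_cases hx : x ∈ tsupport η
    · exact hη.contDiffAt.smul (hu x hx)
    · refine (contDiffAt_const (c := (0 : Fin 3 → ℝ))).congr_of_eventuallyEq ?_
      filter_upwards [notMem_tsupport_iff_eventuallyEq.mp hx] with z hz
      simp [hz]

lemma tsupport_component_subset (u : E3 → Fin 3 → ℝ) (i : Fin 3) :
    tsupport (fun z => u z i) ⊆ tsupport u :=
  closure_mono fun _ hx h => hx (congrFun h i)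

lemma IsTestOn.of_zero (hw : IsTestOn U w) (hv : ContDiff ℝ ∞ v)
    (h : ∀ x, w x = 0 → v x = 0) : IsTestOn U v := by
  have h_supp : tsupport v ⊆ tsupport w := closure_mono fun x => mt (h x)
  exact ⟨hv, hw.2.1.of_isClosed_subset (isClosed_tsupport _) h_supp, h_supp.trans hw.2.2⟩

lemma IsTestOn.mono {V : Set E3} (hw : IsTestOn U w) (hUV : U ⊆ V) : IsTestOn V w :=
  ⟨hw.1, hw.2.1, hw.2.2.trans hUV⟩

lemma IsTestOn.smul (hw : IsTestOn U w) (hη : ContDiff ℝ ∞ η) :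
    IsTestOn U fun z => η z • w z :=
  hw.of_zero (hη.smul hw.1) fun x hx => by rw [hx, smul_zero]

lemma IsTestOn.mulVec (hw : IsTestOn U w) (hT : ContDiff ℝ ∞ T) :
    IsTestOn U fun z => T z *ᵥ w z :=
  hw.of_zero (contDiff_mulVec hT hw.1) fun x hx => by
    rw [hx]; exact Matrix.mulVec_zero _

lemma IsTestOn.differentiableAt (hw : IsTestOn U w) (x : E3) : DifferentiableAt ℝ w x :=
  hw.1.contDiffAt.differentiableAt (by simp)

lemma IsTestOn.component (hw : IsTestOn U w) (i : Fin 3) :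
    ContDiff ℝ ∞ (fun z => w z i) ∧ HasCompactSupport (fun z => w z i) ∧
      tsupport (fun z => w z i) ⊆ U :=
  ⟨contDiff_pi.mp hw.1 i,
    hw.2.1.of_isClosed_subset (isClosed_tsupport _) (tsupport_component_subset w i),
    (tsupport_component_subset w i).trans hw.2.2⟩

end TestFields

/-! ### Green's formula -/

section Green

variable {α : ℝ} {U : Set E3} {f g : E3 → ℝ} {u h : E3 → Fin 3 → ℝ} {x : E3}

lemma integrable_mul_of_tsupport (hg : Continuous g) (hgc : HasCompactSupport g)
    (hf : ∀ x ∈ tsupport g, ContinuousAt f x) : Integrable fun x => f x * g x :=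
  (continuous_of_tsupport fun x hx =>
    (hf x (tsupport_mul_subset_right hx)).mul hg.continuousAt).integrable_of_hasCompactSupport
      hgc.mul_left

lemma integrable_mul_pd (hg : ContDiff ℝ ∞ g) (hgc : HasCompactSupport g)
    (hf : ∀ x ∈ tsupport g, ContDiffAt ℝ ∞ f x) (k : Fin 3) :
    Integrable fun x => f x * pd k g x := by
  have h_supp : tsupport (pd k g) ⊆ tsupport g := tsupport_fderiv_apply_subset ℝ _
  exact integrable_mul_of_tsupport (continuous_pi_iff.mp (continuous_grad hg) k)
    (hgc.of_isClosed_subset (isClosed_tsupport _) h_supp)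
    fun x hx => (hf x (h_supp hx)).continuousAt

lemma integrable_pd_mul (hg : ContDiff ℝ ∞ g) (hgc : HasCompactSupport g)
    (hf : ∀ x ∈ tsupport g, ContDiffAt ℝ ∞ f x) (k : Fin 3) :
    Integrable fun x => pd k f x * g x :=
  integrable_mul_of_tsupport hg.continuous hgc fun x hx => (contDiffAt_pd (hf x hx) k).continuousAt

lemma integral_mul_pd (hg : ContDiff ℝ ∞ g) (hgc : HasCompactSupport g)
    (hf : ∀ x ∈ tsupport g, ContDiffAt ℝ ∞ f x) (k : Fin 3) :
    ∫ x, f x * pd k g x = - ∫ x, pd k f x * g x :=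
  integral_mul_fderiv_eq_neg_fderiv_mul_of_integrable (integrable_pd_mul hg hgc hf k)
    (integrable_mul_pd hg hgc hf k)
    (integrable_mul_of_tsupport hg.continuous hgc fun x hx => (hf x hx).continuousAt)
    (fun x hx => (hf x hx).differentiableAt (by simp))
    (fun x _ => hg.contDiffAt.differentiableAt (by simp))

lemma contDiffAt_divg (hu : ContDiffAt ℝ ∞ u x) : ContDiffAt ℝ ∞ (divg u) x :=
  ContDiffAt.sum fun k _ => contDiffAt_jac hu k k

/-- The stress tensor `Du + α (div u) I`; the Lamé operator is minus its row-wise divergence. -/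
def stress (α : ℝ) (u : E3 → Fin 3 → ℝ) (i k : Fin 3) (x : E3) : ℝ :=
  jac u x i k + α * divg u x * Pi.single (M := fun _ => ℝ) i 1 k

lemma contDiffAt_stress (hu : ContDiffAt ℝ ∞ u x) (i k : Fin 3) :
    ContDiffAt ℝ ∞ (stress α u i k) x :=
  (contDiffAt_jac hu i k).add ((contDiffAt_const.mul (contDiffAt_divg hu)).mul contDiffAt_const)

lemma lameForm_jac_left (α : ℝ) (u : E3 → Fin 3 → ℝ) (x : E3) (Q : Matrix (Fin 3) (Fin 3) ℝ) :
    lameForm α (jac u x) Q = ∑ i, ∑ k, stress α u i k x * Q i k := by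
  have h_trace : (jac u x).trace = divg u x := rfl
  have h_diag : Q.trace = ∑ i, ∑ k, Pi.single (M := fun _ => ℝ) i 1 k * Q i k := by
    simp [Matrix.trace, Pi.single_apply]
  simp only [lameForm, h_trace, h_diag, stress, add_mul, Finset.sum_add_distrib, Finset.mul_sum,
    mul_assoc]

lemma lame_eq_neg_div_stress (hu : ContDiffAt ℝ ∞ u x) (i : Fin 3) :
    lame α u x i = - ∑ k, pd k (stress α u i k) x := by
  have h_pd (k : Fin 3) : pd k (stress α u i k) x =
      pd k (pd k fun z => u z i) x + α * pd k (divg u) x * Pi.single (M := fun _ => ℝ) i 1 k := by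
    have h_jac := (contDiffAt_jac hu i k).differentiableAt (by simp)
    have h_div := (contDiffAt_divg hu).differentiableAt (by simp)
    have h_fderiv : fderiv ℝ (stress α u i k) x = _ :=
      (h_jac.hasFDerivAt.add ((h_div.hasFDerivAt.const_mul α).mul_const
        (Pi.single (M := fun _ => ℝ) i 1 k))).fderiv
    rw [pd, h_fderiv]
    simp only [add_apply, smul_apply, smul_eq_mul]
    exact congrArg₂ _ rfl (mul_comm _ _)
  simp only [h_pd, Finset.sum_add_distrib, lame, lap, Pi.single_apply, mul_ite, mul_one, mul_zero,
    Finset.sum_ite_eq', Finset.mem_univ, if_true]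
  ring

lemma integrable_lameForm (hu : ∀ x ∈ U, ContDiffAt ℝ ∞ u x) (hh : IsTestOn U h) :
    Integrable fun x => lameForm α (jac u x) (jac h x) := by
  simp only [lameForm_jac_left]
  refine integrable_finsetSum _ fun i _ => integrable_finsetSum _ fun k _ => ?_
  obtain ⟨h_smooth, h_compact, h_supp⟩ := hh.component i
  exact integrable_mul_pd h_smooth h_compact
    (fun x hx => contDiffAt_stress (hu x (h_supp hx)) i k) k

lemma integral_lameForm (hu : ∀ x ∈ U, ContDiffAt ℝ ∞ u x) (hh : IsTestOn U h) :
    ∫ x, lameForm α (jac u x) (jac h x) = ∫ x, lame α u x ⬝ᵥ h x := by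
  have h_lame (x : E3) : lame α u x ⬝ᵥ h x =
      ∑ i, ∑ k, -(pd k (stress α u i k) x * h x i) := by
    by_cases hx : x ∈ tsupport h
    · simp only [dotProduct, lame_eq_neg_div_stress (hu x (hh.2.2 hx)), neg_mul, Finset.sum_mul,
        Finset.sum_neg_distrib]
    · simp [image_eq_zero_of_notMem_tsupport hx]
  have h_stress (i k : Fin 3) :
      ∀ x ∈ tsupport (fun z => h z i), ContDiffAt ℝ ∞ (stress α u i k) x :=
    fun x hx => contDiffAt_stress (hu x ((hh.component i).2.2 hx)) i k
  have h_left (i k : Fin 3) : Integrable fun x => stress α u i k x * jac h x i k :=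
    integrable_mul_pd (hh.component i).1 (hh.component i).2.1 (h_stress i k) k
  have h_right (i k : Fin 3) : Integrable fun x => -(pd k (stress α u i k) x * h x i) :=
    (integrable_pd_mul (hh.component i).1 (hh.component i).2.1 (h_stress i k) k).neg
  calc ∫ x, lameForm α (jac u x) (jac h x)
      = ∑ i, ∑ k, ∫ x, stress α u i k x * jac h x i k := by
        simp only [lameForm_jac_left]
        rw [integral_finsetSum _ fun i _ => integrable_finsetSum _ fun k _ => h_left i k]
        exact Finset.sum_congr rfl fun i _ => integral_finsetSum _ fun k _ => h_left i k
    _ = ∑ i, ∑ k, ∫ x, -(pd k (stress α u i k) x * h x i) := by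
        refine Finset.sum_congr rfl fun i _ => Finset.sum_congr rfl fun k _ => ?_
        rw [integral_neg]
        exact integral_mul_pd (hh.component i).1 (hh.component i).2.1 (h_stress i k) k
    _ = ∫ x, lame α u x ⬝ᵥ h x := by
        simp only [h_lame]
        rw [integral_finsetSum _ fun i _ => integrable_finsetSum _ fun k _ => h_right i k]
        exact Finset.sum_congr rfl fun i _ => (integral_finsetSum _ fun k _ => h_right i k).symm

end Green

/-! ### Energy densities and approximation by test fields -/

section Density

variable {Ω : Set E3} {a b : ℝ} {u v w : E3 → Fin 3 → ℝ} {x : E3}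

/-- The energy density `a |u|² + b |Du|²`. -/
def density (a b : ℝ) (u : E3 → Fin 3 → ℝ) (x : E3) : ℝ := a * sqSum (u x) + b * frobSq (jac u x)

lemma density_zero_one (u : E3 → Fin 3 → ℝ) : density 0 1 u = fun x => frobSq (jac u x) := by
  funext x
  rw [density, zero_mul, zero_add, one_mul]

lemma density_nonneg (ha : 0 ≤ a) (hb : 0 ≤ b) (u : E3 → Fin 3 → ℝ) (x : E3) :
    0 ≤ density a b u x :=
  add_nonneg (mul_nonneg ha (sqSum_nonneg _)) (mul_nonneg hb (frobSq_nonneg _))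

lemma abs_density_le (a b : ℝ) (u : E3 → Fin 3 → ℝ) (x : E3) :
    |density a b u x| ≤ (|a| + |b|) * density 1 1 u x := by
  have h_sq := sqSum_nonneg (u x)
  have h_frob := frobSq_nonneg (jac u x)
  refine (abs_add_le _ _).trans ?_
  rw [abs_mul, abs_mul, abs_of_nonneg h_sq, abs_of_nonneg h_frob, density]
  linarith [mul_nonneg (abs_nonneg a) h_frob, mul_nonneg (abs_nonneg b) h_sq]

lemma density_eq_zero (hx : x ∉ tsupport u) : density a b u x = 0 := by
  simp [density, image_eq_zero_of_notMem_tsupport hx, jac_eq_zero hx]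

lemma continuousAt_density (hu : ContDiffAt ℝ ∞ u x) : ContinuousAt (density a b u) x :=
  (continuousAt_const.mul (continuous_sqSum.continuousAt.comp hu.continuousAt)).add
    (continuousAt_const.mul (continuous_frobSq.continuousAt.comp (continuousAt_jac hu)))

lemma density_sub_le (ha : 0 ≤ a) (hb : 0 ≤ b) (hu : DifferentiableAt ℝ u x)
    (hv : DifferentiableAt ℝ v x) :
    density a b (u - v) x ≤ 2 * (density a b u x + density a b v x) := by
  rw [density, jac_sub hu hv, Pi.sub_apply]
  calc a * sqSum (u x - v x) + b * frobSq (jac u x - jac v x)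
      ≤ a * (2 * (sqSum (u x) + sqSum (v x))) +
          b * (2 * (frobSq (jac u x) + frobSq (jac v x))) := by
        gcongr
        · exact sqSum_sub_le _ _
        · exact frobSq_sub_le _ _
    _ = 2 * (density a b u x + density a b v x) := by rw [density, density]; ring

lemma density_sub_comm (hu : DifferentiableAt ℝ u x) (hv : DifferentiableAt ℝ v x) :
    density a b (u - v) x = density a b (v - u) x := by
  rw [density, density, jac_sub hu hv, jac_sub hv hu, Pi.sub_apply, Pi.sub_apply,
    ← neg_sub (u x), ← neg_sub (jac u x), sqSum_neg, frobSq_neg]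

lemma density_le_add_sub (ha : 0 ≤ a) (hb : 0 ≤ b) (hu : DifferentiableAt ℝ u x)
    (hv : DifferentiableAt ℝ v x) :
    density a b v x ≤ 2 * (density a b u x + density a b (u - v) x) := by
  simpa only [sub_sub_cancel] using density_sub_le ha hb hu (hu.sub hv)

lemma IsTestOn.continuous_density {U : Set E3} (hw : IsTestOn U w) :
    Continuous (density a b w) :=
  continuous_iff_continuousAt.mpr fun _ => continuousAt_density hw.1.contDiffAt

lemma IsTestOn.integrable_density {U : Set E3} (hw : IsTestOn U w) :
    Integrable (density a b w) :=
  hw.continuous_density.integrable_of_hasCompactSupport <|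
    HasCompactSupport.intro hw.2.1 fun _ => density_eq_zero

lemma MemH10.contDiffAt (hΩ : IsOpen Ω) (hu : MemH10 Ω u) (hx : x ∈ Ω) : ContDiffAt ℝ ∞ u x :=
  hu.1.contDiffAt (hΩ.mem_nhds hx)

lemma MemH10.differentiableAt (hΩ : IsOpen Ω) (hu : MemH10 Ω u) (hx : x ∈ Ω) :
    DifferentiableAt ℝ u x :=
  (hu.contDiffAt hΩ hx).differentiableAt (by simp)

lemma MemH10.integrableOn_density_one_one (hu : MemH10 Ω u) : IntegrableOn (density 1 1 u) Ω := by
  have h_eq : density 1 1 u = fun x => sqSum (u x) + frobSq (jac u x) := by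
    funext x
    rw [density, one_mul, one_mul]
  rw [h_eq]
  exact hu.2.1

lemma MemH10.integrableOn_density (hΩ : IsOpen Ω) (hu : MemH10 Ω u) :
    IntegrableOn (density a b u) Ω :=
  (hu.integrableOn_density_one_one.const_mul (|a| + |b|)).mono'
    (ContinuousOn.aestronglyMeasurable (fun _ hx =>
      (continuousAt_density (hu.contDiffAt hΩ hx)).continuousWithinAt) hΩ.measurableSet)
    (ae_of_all _ fun x => abs_density_le a b u x)

lemma MemH10.integrableOn_frobSq (hΩ : IsOpen Ω) (hu : MemH10 Ω u) :
    IntegrableOn (fun x => frobSq (jac u x)) Ω :=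
  density_zero_one u ▸ hu.integrableOn_density hΩ

lemma MemH10.integrableOn_density_sub (hΩ : IsOpen Ω) (hu : MemH10 Ω u) (hw : IsTestOn Ω w) :
    IntegrableOn (density a b (u - w)) Ω := by
  have h_cont : ContinuousOn (density a b (u - w)) Ω := fun x hx =>
    (continuousAt_density ((hu.contDiffAt hΩ hx).sub hw.1.contDiffAt)).continuousWithinAt
  have h_sum : IntegrableOn (fun x => density 1 1 u x + density 1 1 w x) Ω :=
    hu.integrableOn_density_one_one.add hw.integrable_density.integrableOn
  refine ((h_sum.const_mul 2).const_mul (|a| + |b|)).mono'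
    (h_cont.aestronglyMeasurable hΩ.measurableSet) ?_
  filter_upwards [ae_restrict_mem hΩ.measurableSet] with x hx
  refine (abs_density_le a b _ x).trans ?_
  gcongr
  exact density_sub_le zero_le_one zero_le_one (hu.differentiableAt hΩ hx) (hw.differentiableAt x)

end Density

section Approximation

variable {Ω S : Set E3} {a b ε : ℝ} {u w : E3 → Fin 3 → ℝ} {x y : E3}

/-- `w` is a test field in `Ω` whose squared `H¹(Ω)` distance to `u` is less than `ε`. -/
structure IsApprox (Ω : Set E3) (u : E3 → Fin 3 → ℝ) (ε : ℝ) (w : E3 → Fin 3 → ℝ) : Prop where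
  test : IsTestOn Ω w
  integral_lt : ∫ x in Ω, density 1 1 (u - w) x < ε

lemma MemH10.exists_isApprox (hu : MemH10 Ω u) (hε : 0 < ε) : ∃ w, IsApprox Ω u ε w := by
  obtain ⟨-, -, un, h_test, h_lim⟩ := hu
  obtain ⟨n, hn⟩ := (h_lim.eventually_lt_const hε).exists
  refine ⟨un n, h_test n, ?_⟩
  simpa only [density, one_mul] using! hn

lemma IsApprox.setIntegral_density_sub_le (hΩ : IsOpen Ω) (hu : MemH10 Ω u)
    (hw : IsApprox Ω u ε w) (hSΩ : S ⊆ Ω) (ha : 0 ≤ a) (hb : 0 ≤ b) :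
    ∫ x in S, density a b (u - w) x ≤ (a + b) * ε := by
  calc ∫ x in S, density a b (u - w) x ≤ ∫ x in Ω, density a b (u - w) x :=
        setIntegral_mono_set (hu.integrableOn_density_sub hΩ hw.test)
          (ae_of_all _ fun x => density_nonneg ha hb _ x) hSΩ.eventuallyLE
    _ ≤ ∫ x in Ω, (a + b) * density 1 1 (u - w) x := by
        refine integral_mono (hu.integrableOn_density_sub hΩ hw.test)
          ((hu.integrableOn_density_sub hΩ hw.test).const_mul _) fun x => ?_
        simpa only [abs_of_nonneg ha, abs_of_nonneg hb] using
          (le_abs_self _).trans (abs_density_le a b (u - w) x)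
    _ ≤ (a + b) * ε := by
        rw [integral_const_mul]
        exact mul_le_mul_of_nonneg_left hw.integral_lt.le (add_nonneg ha hb)

lemma setIntegral_density_le_add_sub (hS : MeasurableSet S) (ha : 0 ≤ a) (hb : 0 ≤ b)
    (hu : IntegrableOn (density a b u) S) (hw : IntegrableOn (density a b w) S)
    (h_sub : IntegrableOn (density a b (u - w)) S) (hu_diff : ∀ x ∈ S, DifferentiableAt ℝ u x)
    (hw_diff : ∀ x ∈ S, DifferentiableAt ℝ w x) :
    ∫ x in S, density a b w x ≤
      2 * ((∫ x in S, density a b u x) + ∫ x in S, density a b (u - w) x) := by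
  rw [← integral_add hu h_sub, ← integral_const_mul]
  exact setIntegral_mono_on hw ((hu.add h_sub).const_mul 2) hS fun x hx =>
    density_le_add_sub ha hb (hu_diff x hx) (hw_diff x hx)

lemma IsApprox.setIntegral_density_le (hΩ : IsOpen Ω) (hu : MemH10 Ω u) (hw : IsApprox Ω u ε w)
    (hS : MeasurableSet S) (hSΩ : S ⊆ Ω) (ha : 0 ≤ a) (hb : 0 ≤ b) :
    ∫ x in S, density a b w x ≤ 2 * ((∫ x in S, density a b u x) + (a + b) * ε) := by
  refine (setIntegral_density_le_add_sub hS ha hb ((hu.integrableOn_density hΩ).mono_set hSΩ)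
    hw.test.integrable_density.integrableOn
    ((hu.integrableOn_density_sub hΩ hw.test).mono_set hSΩ)
    (fun x hx => hu.differentiableAt hΩ (hSΩ hx)) fun x _ => hw.test.differentiableAt x).trans ?_
  gcongr
  exact hw.setIntegral_density_sub_le hΩ hu hSΩ ha hb

lemma IsApprox.setIntegral_density_ge (hΩ : IsOpen Ω) (hu : MemH10 Ω u) (hw : IsApprox Ω u ε w)
    (hS : MeasurableSet S) (hSΩ : S ⊆ Ω) (ha : 0 ≤ a) (hb : 0 ≤ b) :
    ∫ x in S, density a b u x ≤ 2 * ((∫ x in S, density a b w x) + (a + b) * ε) := by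
  have h_comm : Set.EqOn (density a b (u - w)) (density a b (w - u)) S := fun x hx =>
    density_sub_comm (hu.differentiableAt hΩ (hSΩ hx)) (hw.test.differentiableAt x)
  refine (setIntegral_density_le_add_sub hS ha hb hw.test.integrable_density.integrableOn
    ((hu.integrableOn_density hΩ).mono_set hSΩ)
    (((hu.integrableOn_density_sub hΩ hw.test).mono_set hSΩ).congr_fun h_comm hS)
    (fun x _ => hw.test.differentiableAt x) fun x hx => hu.differentiableAt hΩ (hSΩ hx)).trans ?_
  rw [← setIntegral_congr_fun hS h_comm]
  gcongr
  exact hw.setIntegral_density_sub_le hΩ hu hSΩ ha hb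

lemma density_smul_le {η : E3 → ℝ} {B : ℝ} (hη : DifferentiableAt ℝ η x)
    (hw : DifferentiableAt ℝ w x) (h_le : η x ^ 2 ≤ 1) (h_grad : sqSum (grad η x) ≤ B) :
    density 1 1 (fun z => η z • w z) x ≤ (2 + 2 * B) * density 1 1 w x := by
  have h_sq := sqSum_nonneg (w x)
  have h_frob := frobSq_nonneg (jac w x)
  have hB : 0 ≤ B := (sqSum_nonneg _).trans h_grad
  calc density 1 1 (fun z => η z • w z) x
      ≤ 1 * (1 * sqSum (w x)) + 1 * (2 * (1 * frobSq (jac w x) + B * sqSum (w x))) := by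
        rw [density, sqSum_smul]
        gcongr
        refine (frobSq_jac_smul_le hη hw).trans ?_
        gcongr
    _ ≤ (2 + 2 * B) * density 1 1 w x := by
        rw [density]
        linarith [mul_nonneg hB h_frob]

lemma exists_grad_bound {η : E3 → ℝ} (hη : ContDiff ℝ ∞ η) (h_supp : HasCompactSupport η) :
    ∃ B, ∀ x, sqSum (grad η x) ≤ B := by
  obtain ⟨B, hB⟩ := (continuous_sqSum.comp (continuous_grad hη)).bounded_above_of_compact_support
    (HasCompactSupport.intro h_supp fun x hx => by simp [grad_eq_zero hx])
  exact ⟨B, fun x => (le_abs_self _).trans (hB x)⟩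

lemma MemH10.exists_isApprox_eqOn_ball (hΩ : IsOpen Ω) (hu : MemH10 Ω u) {d : ℝ} (hd : 0 < d)
    (h_ball : closedBall y (2 * d) ⊆ Ω) (hε : 0 < ε) :
    ∃ w, IsApprox Ω u ε w ∧ Set.EqOn w u (ball y d) := by
  let χ : ContDiffBump y := ⟨d, 2 * d, hd, by linarith⟩
  have hχΩ : tsupport χ ⊆ Ω := χ.tsupport_eq.trans_subset h_ball
  obtain ⟨B, hB⟩ := exists_grad_bound χ.contDiff χ.hasCompactSupport
  have hB0 : 0 ≤ B := (sqSum_nonneg _).trans (hB y)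
  obtain ⟨v, h_test, h_lt⟩ := hu.exists_isApprox (ε := ε / (2 + 2 * B)) (by positivity)
  have h_supp := tsupport_smul_subset_left χ (u - v)
  have h_sub : (u - fun z => v z + χ z • (u - v) z) = fun z => (1 - χ z) • (u - v) z := by
    funext z
    simp only [Pi.sub_apply, sub_smul, one_smul]
    abel
  refine ⟨fun z => v z + χ z • (u - v) z, ⟨⟨?_, ?_, ?_⟩, ?_⟩, fun z hz => ?_⟩
  · exact h_test.1.add <| contDiff_smul_of_tsupport χ.contDiff fun x hx =>
      (hu.contDiffAt hΩ (hχΩ hx)).sub h_test.1.contDiffAt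
  · exact h_test.2.1.add (χ.hasCompactSupport.of_isClosed_subset (isClosed_tsupport _) h_supp)
  · exact (tsupport_add _ _).trans (Set.union_subset h_test.2.2 (h_supp.trans hχΩ))
  · rw [h_sub]
    have h_int := hu.integrableOn_density_sub (a := 1) (b := 1) hΩ h_test
    calc ∫ x in Ω, density 1 1 (fun z => (1 - χ z) • (u - v) z) x
        ≤ ∫ x in Ω, (2 + 2 * B) * density 1 1 (u - v) x := by
          refine integral_mono_of_nonneg (ae_of_all _ fun x =>
            density_nonneg zero_le_one zero_le_one _ x) (h_int.const_mul _) ?_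
          filter_upwards [ae_restrict_mem hΩ.measurableSet] with x hx
          have h_diff : DifferentiableAt ℝ χ x := χ.contDiffAt.differentiableAt one_ne_zero
          refine density_smul_le (h_diff.const_sub 1)
            ((hu.differentiableAt hΩ hx).sub (h_test.differentiableAt x)) ?_ ?_
          · exact pow_le_one₀ (sub_nonneg.mpr χ.le_one) (sub_le_self _ χ.nonneg)
          · rw [grad_const_sub, sqSum_neg]
            exact hB x
      _ < ε := by
          rw [integral_const_mul]
          exact (lt_div_iff₀' (by positivity)).mp h_lt
  · simp [χ.one_of_mem_closedBall (ball_subset_closedBall hz)]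

end Approximation

/-! ### Cut-off functions -/

section Cutoff

variable {C ρ : ℝ} {η : E3 → ℝ} {x : E3}

/-- `η` cuts off at scale `ρ`: it is `1` on `B_{5ρ/4}`, supported in `B_{2ρ}`, and
`|∇η|² ≤ C/ρ²`. -/
structure IsCutoff (C ρ : ℝ) (η : E3 → ℝ) : Prop where
  contDiff : ContDiff ℝ ∞ η
  hasCompactSupport : HasCompactSupport η
  tsupport_subset : tsupport η ⊆ ball 0 (2 * ρ)
  nonneg : ∀ x, 0 ≤ η x
  le_one : ∀ x, η x ≤ 1
  eq_one : ∀ x ∈ ball (0 : E3) (5 / 4 * ρ), η x = 1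
  grad_le : ∀ x, sqSum (grad η x) ≤ C * ρ⁻¹ ^ 2

lemma IsCutoff.differentiableAt (hη : IsCutoff C ρ η) (x : E3) : DifferentiableAt ℝ η x :=
  hη.contDiff.contDiffAt.differentiableAt (by simp)

lemma IsCutoff.eventuallyEq_one (hη : IsCutoff C ρ η) (hx : x ∈ ball (0 : E3) (5 / 4 * ρ)) :
    η =ᶠ[nhds x] fun _ => 1 :=
  (isOpen_ball.eventually_mem hx).mono hη.eq_one

lemma exists_cutoff : ∃ C, 0 ≤ C ∧ ∀ ρ > 0, ∃ η, IsCutoff C ρ η := by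
  let χ : ContDiffBump (0 : E3) := ⟨5 / 4, 3 / 2, by norm_num, by norm_num⟩
  obtain ⟨C, hC⟩ := exists_grad_bound χ.contDiff χ.hasCompactSupport
  refine ⟨C, (sqSum_nonneg _).trans (hC 0), fun ρ hρ => ⟨fun x => χ (ρ⁻¹ • x), ?_⟩⟩
  have h_norm (x : E3) : ‖ρ⁻¹ • x‖ = ‖x‖ / ρ := by
    rw [norm_smul, norm_inv, Real.norm_of_nonneg hρ.le, inv_mul_eq_div]
  have h_supp : tsupport (fun x => χ (ρ⁻¹ • x)) ⊆ closedBall 0 (3 / 2 * ρ) := by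
    refine closure_minimal (fun x hx => ?_) isClosed_closedBall
    have h_mem : ρ⁻¹ • x ∈ ball (0 : E3) (3 / 2) := χ.support_eq ▸ hx
    rw [mem_ball_zero_iff, h_norm, div_lt_iff₀ hρ] at h_mem
    exact mem_closedBall_zero_iff.mpr h_mem.le
  refine ⟨χ.contDiff.comp (contDiff_const_smul _), HasCompactSupport.of_support_subset_isCompact
    (isCompact_closedBall _ _) (subset_tsupport _ |>.trans h_supp),
    h_supp.trans (closedBall_subset_ball (by linarith)), fun _ => χ.nonneg, fun _ => χ.le_one,
    fun x hx => χ.one_of_mem_closedBall ?_, fun x => ?_⟩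
  · rw [mem_ball_zero_iff, ← div_lt_iff₀ hρ, ← h_norm] at hx
    exact mem_closedBall_zero_iff.mpr hx.le
  · rw [grad_comp_smul, sqSum_smul, mul_comm]
    gcongr
    exact hC _

end Cutoff

/-! ### Estimates of the fundamental matrix -/

section Kernel

variable {α : ℝ}

lemma exists_norm_le_of_homogeneous {E F : Type*} [NormedAddCommGroup E] [NormedSpace ℝ E]
    [ProperSpace E] [NormedAddCommGroup F] [NormedSpace ℝ F] {f : E → F} {n : ℕ}
    (hf : ContinuousOn f {0}ᶜ) (h_hom : ∀ t : ℝ, 0 < t → ∀ z ≠ 0, t ^ n • f (t • z) = f z) :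
    ∃ C, ∀ z ≠ 0, ‖f z‖ ≤ C * ‖z‖⁻¹ ^ n := by
  obtain ⟨C, hC⟩ := (isCompact_sphere (0 : E) 1).exists_bound_of_continuousOn
    (hf.mono fun z hz => ne_zero_of_mem_unit_sphere ⟨z, hz⟩)
  refine ⟨C, fun z hz => ?_⟩
  have h_norm : 0 < ‖z‖⁻¹ := inv_pos.mpr (norm_pos_iff.mpr hz)
  rw [← h_hom _ h_norm z hz, norm_smul, norm_pow, norm_inv, norm_norm, mul_comm]
  gcongr
  exact hC _ (by simp [norm_smul, norm_ne_zero_iff.mpr hz])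

lemma contDiffAt_Phi (α : ℝ) {z : E3} (hz : z ≠ 0) : ContDiffAt ℝ ∞ (Phi α) z := by
  have h_norm : ContDiffAt ℝ ∞ (fun z : E3 => ‖z‖) z := contDiffAt_norm ℝ hz
  have h_ne : ‖z‖ ≠ 0 := norm_ne_zero_iff.mpr hz
  refine contDiffAt_pi.mpr fun i => contDiffAt_pi.mpr fun j => ?_
  exact (contDiffAt_const.mul (h_norm.inv h_ne)).mul <| contDiffAt_const.add <|
    ContDiffAt.div (by fun_prop) (h_norm.pow 2) (pow_ne_zero _ h_ne)

lemma Phi_smul (α : ℝ) {t : ℝ} (ht : 0 < t) (z : E3) : Phi α (t • z) = t⁻¹ • Phi α z := by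
  funext i j
  have h_entry : α / (α + 2) * ((t • z) i * (t • z) j) / ‖t • z‖ ^ 2 =
      α / (α + 2) * (z i * z j) / ‖z‖ ^ 2 := by
    rw [PiLp.smul_apply, PiLp.smul_apply, smul_eq_mul, smul_eq_mul, norm_smul, mul_pow,
      Real.norm_of_nonneg ht.le, ← mul_div_mul_left _ (‖z‖ ^ 2) (pow_ne_zero 2 ht.ne')]
    ring
  rw [Pi.smul_apply, Pi.smul_apply, smul_eq_mul, Phi, Phi, h_entry, norm_smul,
    Real.norm_of_nonneg ht.le, mul_inv]
  ring

lemma exists_frobSq_Phi_le (α : ℝ) : ∃ C, ∀ z ≠ 0, frobSq (Phi α z) ≤ C * ‖z‖⁻¹ ^ 2 := by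
  obtain ⟨C, hC⟩ := exists_norm_le_of_homogeneous (f := fun z => frobSq (Phi α z)) (n := 2)
    (fun z hz => (continuous_frobSq.continuousAt.comp
      (contDiffAt_Phi α hz).continuousAt).continuousWithinAt)
    fun t ht z _ => by
      have h_smul : frobSq (Phi α (t • z)) = t⁻¹ ^ 2 * frobSq (Phi α z) :=
        (congrArg frobSq (Phi_smul α ht z)).trans (frobSq_smul _ _)
      rw [h_smul, smul_eq_mul]
      field_simp
  exact ⟨C, fun z hz => (le_abs_self _).trans (hC z hz)⟩

lemma exists_derivSq_Phi_le (α : ℝ) : ∃ C, ∀ z ≠ 0, derivSq (Phi α) z ≤ C * ‖z‖⁻¹ ^ 4 := by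
  have h_hom {t : ℝ} (ht : 0 < t) {z : E3} (hz : z ≠ 0) :
      t ^ 4 • derivSq (Phi α) (t • z) = derivSq (Phi α) z := by
    have h_smul : t ^ 2 * derivSq (Phi α) (t • z) = t⁻¹ ^ 2 * derivSq (Phi α) z := by
      rw [← derivSq_comp_smul, funext (Phi_smul α ht),
        derivSq_const_smul _ ((contDiffAt_Phi α hz).differentiableAt (by simp))]
    rw [smul_eq_mul, show t ^ 4 = t ^ 2 * t ^ 2 by ring, mul_assoc, h_smul]
    field_simp
  obtain ⟨C, hC⟩ := exists_norm_le_of_homogeneous (f := derivSq (Phi α)) (n := 4)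
    (fun z hz => (continuousAt_derivSq (contDiffAt_Phi α hz)).continuousWithinAt)
    fun t ht z hz => h_hom ht hz
  exact ⟨C, fun z hz => (le_abs_self _).trans (hC z hz)⟩

lemma exists_Phi_le_of_half_le_norm (α : ℝ) :
    ∃ C, 0 ≤ C ∧ ∀ ρ > 0, ∀ z : E3, ρ / 2 ≤ ‖z‖ →
      frobSq (Phi α z) ≤ C * ρ⁻¹ ^ 2 ∧ derivSq (Phi α) z ≤ C * ρ⁻¹ ^ 4 := by
  obtain ⟨C, hC⟩ := exists_frobSq_Phi_le α
  obtain ⟨D, hD⟩ := exists_derivSq_Phi_le α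
  refine ⟨4 * |C| + 16 * |D|, by positivity, fun ρ hρ z hz => ?_⟩
  have h_pos : 0 < ‖z‖ := (half_pos hρ).trans_le hz
  have h_inv : ‖z‖⁻¹ ≤ 2 * ρ⁻¹ := by
    rw [← div_eq_mul_inv, ← inv_div]
    exact inv_anti₀ (half_pos hρ) hz
  constructor
  · calc frobSq (Phi α z) ≤ |C| * (2 * ρ⁻¹) ^ 2 := by
          refine (hC z (norm_pos_iff.mp h_pos)).trans ?_
          gcongr
          exact le_abs_self C
      _ = 4 * |C| * ρ⁻¹ ^ 2 := by ring
      _ ≤ _ := by gcongr; exact le_add_of_nonneg_right (by positivity)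
  · calc derivSq (Phi α) z ≤ |D| * (2 * ρ⁻¹) ^ 4 := by
          refine (hD z (norm_pos_iff.mp h_pos)).trans ?_
          gcongr
          exact le_abs_self D
      _ = 16 * |D| * ρ⁻¹ ^ 4 := by ring
      _ ≤ _ := by gcongr; exact le_add_of_nonneg_left (by positivity)

/-- `Ψ` is a smooth matrix field that agrees with the singular kernel `Φ(· - y)` off a ball
around `y`. -/
structure IsDesingularization (α : ℝ) (y : E3) (d : ℝ) (Ψ : E3 → Fin 3 → Fin 3 → ℝ) : Prop where
  contDiff : ContDiff ℝ ∞ Ψ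
  eq_Phi : ∀ x ∉ ball y d, Ψ x = Phi α (x - y)

lemma exists_isDesingularization (α : ℝ) (y : E3) {d : ℝ} (hd : 0 < d) :
    ∃ Ψ, IsDesingularization α y d Ψ := by
  let χ : ContDiffBump y := ⟨d / 2, d, half_pos hd, half_lt_self hd⟩
  refine ⟨fun x => (1 - χ x) • Phi α (x - y), contDiff_iff_contDiffAt.mpr fun x => ?_,
    fun x hx => ?_⟩
  · by_cases hx : x = y
    · subst hx
      refine (contDiffAt_const (c := (0 : Fin 3 → Fin 3 → ℝ))).congr_of_eventuallyEq ?_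
      filter_upwards [χ.eventuallyEq_one] with z hz
      rw [hz, Pi.one_apply, sub_self, zero_smul]
    · exact (contDiffAt_const.sub χ.contDiffAt).smul
        ((contDiffAt_Phi α (sub_ne_zero.mpr hx)).comp x (contDiffAt_id.sub contDiffAt_const))
  · rw [χ.zero_of_le_dist (not_lt.mp hx), sub_zero, one_smul]

lemma IsDesingularization.bounds {y : E3} {d ρ C : ℝ} {Ψ : E3 → Fin 3 → Fin 3 → ℝ}
    (hΨ : IsDesingularization α y d Ψ) (hy : ‖y‖ < ρ / 2)
    (h_ball : closedBall y d ⊆ ball 0 ρ)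
    (hC : ∀ z : E3, ρ / 2 ≤ ‖z‖ →
      frobSq (Phi α z) ≤ C * ρ⁻¹ ^ 2 ∧ derivSq (Phi α) z ≤ C * ρ⁻¹ ^ 4)
    {x : E3} (hx : ρ ≤ ‖x‖) :
    frobSq (Ψ x) ≤ C * ρ⁻¹ ^ 2 ∧ derivSq Ψ x ≤ C * ρ⁻¹ ^ 4 := by
  have hx_ball : x ∈ (closedBall y d)ᶜ := fun h =>
    (mem_ball_zero_iff.mp (h_ball h)).not_ge hx
  have h_eq : Ψ =ᶠ[nhds x] fun z => Phi α (z - y) := by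
    filter_upwards [isClosed_closedBall.isOpen_compl.mem_nhds hx_ball] with z hz
    exact hΨ.eq_Phi z fun h => hz (ball_subset_closedBall h)
  have h_norm : ρ / 2 ≤ ‖x - y‖ := by linarith [norm_sub_norm_le x y]
  rw [derivSq_congr h_eq, derivSq_comp_sub_right, h_eq.eq_of_nhds]
  exact hC _ h_norm

end Kernel

/-! ### The commutator with a cut-off -/

section Commutator

variable {α C₁ C₂ ρ : ℝ} {η : E3 → ℝ} {w : E3 → Fin 3 → ℝ} {Ψ : E3 → Fin 3 → Fin 3 → ℝ} {x : E3}

/-- The error made in `D(ηw) : D(Ψηw)` when the cut-off `η` is moved from the first factor to the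
second one. It only involves `∇η`, hence lives where the kernel `Ψ` is not singular. -/
def cutoffCommutator (α : ℝ) (η : E3 → ℝ) (Ψ : E3 → Fin 3 → Fin 3 → ℝ) (w : E3 → Fin 3 → ℝ)
    (x : E3) : ℝ :=
  lameForm α (jac (fun z => η z • w z) x) (jac (fun z => Ψ z *ᵥ (η z • w z)) x) -
    lameForm α (jac w x) (jac (fun z => η z • (Ψ z *ᵥ (η z • w z))) x)

lemma cutoffCommutator_eq {h : E3 → Fin 3 → ℝ} (hη : DifferentiableAt ℝ η x)
    (hw : DifferentiableAt ℝ w x) (hh : DifferentiableAt ℝ h x) :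
    lameForm α (jac (fun z => η z • w z) x) (jac h x) -
        lameForm α (jac w x) (jac (fun z => η z • h z) x) =
      lameForm α (Matrix.vecMulVec (w x) (grad η x)) (jac h x) -
        lameForm α (jac w x) (Matrix.vecMulVec (h x) (grad η x)) := by
  rw [jac_smul hη hw, jac_smul hη hh, lameForm_add_left, lameForm_add_right, lameForm_smul_left,
    lameForm_smul_right]
  ring

lemma frobSq_jac_mulVec_smul_le (hη : DifferentiableAt ℝ η x) (hw : DifferentiableAt ℝ w x)
    (hΨ : DifferentiableAt ℝ Ψ x) {r : ℝ} (hη_le : η x ^ 2 ≤ 1)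
    (hη_grad : sqSum (grad η x) ≤ C₁ * r ^ 2) (hΨ_le : frobSq (Ψ x) ≤ C₂ * r ^ 2)
    (hΨ_deriv : derivSq Ψ x ≤ C₂ * r ^ 4) :
    frobSq (jac (fun z => Ψ z *ᵥ (η z • w z)) x) ≤
      (2 * C₂ + 4 * C₁ * C₂) * (r ^ 4 * sqSum (w x)) + 4 * C₂ * (r ^ 2 * frobSq (jac w x)) := by
  have h_sq : sqSum (η x • w x) ≤ 1 * sqSum (w x) := by
    rw [sqSum_smul]
    exact mul_le_mul_of_nonneg_right hη_le (sqSum_nonneg _)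
  have h_jac : frobSq (jac (fun z => η z • w z) x) ≤
      2 * (1 * frobSq (jac w x) + C₁ * r ^ 2 * sqSum (w x)) := by
    refine (frobSq_jac_smul_le hη hw).trans ?_
    gcongr
    · exact frobSq_nonneg _
    · exact sqSum_nonneg _
  refine (frobSq_jac_mulVec_le hΨ (hη.smul hw)).trans ?_
  calc 2 * (derivSq Ψ x * sqSum (η x • w x) +
        frobSq (Ψ x) * frobSq (jac (fun z => η z • w z) x))
      ≤ 2 * (C₂ * r ^ 4 * (1 * sqSum (w x)) +
          C₂ * r ^ 2 * (2 * (1 * frobSq (jac w x) + C₁ * r ^ 2 * sqSum (w x)))) := by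
        gcongr
        · exact sqSum_nonneg _
        · exact (derivSq_nonneg _ _).trans hΨ_deriv
        · exact frobSq_nonneg _
        · exact (frobSq_nonneg _).trans hΨ_le
    _ = _ := by ring

lemma frobSq_vecMulVec_mulVec_smul_le {r : ℝ} (hη_le : η x ^ 2 ≤ 1)
    (hη_grad : sqSum (grad η x) ≤ C₁ * r ^ 2) (hΨ_le : frobSq (Ψ x) ≤ C₂ * r ^ 2) :
    frobSq (Matrix.vecMulVec (Ψ x *ᵥ (η x • w x)) (grad η x)) ≤
      C₁ * C₂ * (r ^ 4 * sqSum (w x)) := by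
  have h_sq : sqSum (Ψ x *ᵥ (η x • w x)) ≤ C₂ * r ^ 2 * (1 * sqSum (w x)) := by
    refine (sqSum_mulVec_le (Ψ x) (η x • w x)).trans ?_
    rw [sqSum_smul]
    exact mul_le_mul hΨ_le (mul_le_mul_of_nonneg_right hη_le (sqSum_nonneg _))
      (mul_nonneg (sq_nonneg _) (sqSum_nonneg _)) ((frobSq_nonneg _).trans hΨ_le)
  rw [frobSq_vecMulVec]
  calc _ ≤ C₂ * r ^ 2 * (1 * sqSum (w x)) * (C₁ * r ^ 2) :=
        mul_le_mul h_sq hη_grad (sqSum_nonneg _) ((sqSum_nonneg _).trans h_sq)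
    _ = _ := by ring

lemma two_mul_abs_cutoffCommutator_le (hη : DifferentiableAt ℝ η x) (hw : DifferentiableAt ℝ w x)
    (hΨ : DifferentiableAt ℝ Ψ x) {r : ℝ} (hr : 0 < r) (hη_le : η x ^ 2 ≤ 1)
    (hη_grad : sqSum (grad η x) ≤ C₁ * r ^ 2) (hΨ_le : frobSq (Ψ x) ≤ C₂ * r ^ 2)
    (hΨ_deriv : derivSq Ψ x ≤ C₂ * r ^ 4) :
    2 * |cutoffCommutator α η Ψ w x| ≤
      (1 + |α| * 3) * ((1 + C₁ + 4 * C₂ + 5 * (C₁ * C₂)) * density (r ^ 3) r w x) := by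
  set h : E3 → Fin 3 → ℝ := fun z => Ψ z *ᵥ (η z • w z)
  set s := sqSum (w x)
  set F := frobSq (jac w x)
  have hs : 0 ≤ s := sqSum_nonneg _
  have hF : 0 ≤ F := frobSq_nonneg _
  have hC₁ : 0 ≤ C₁ := nonneg_of_mul_nonneg_left ((sqSum_nonneg _).trans hη_grad) (pow_pos hr 2)
  have hC₂ : 0 ≤ C₂ := nonneg_of_mul_nonneg_left ((frobSq_nonneg _).trans hΨ_le) (pow_pos hr 2)
  have h_first : frobSq (Matrix.vecMulVec (w x) (grad η x)) ≤ s * (C₁ * r ^ 2) := by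
    rw [frobSq_vecMulVec]
    gcongr
  have h_jac := frobSq_jac_mulVec_smul_le hη hw hΨ hη_le hη_grad hΨ_le hΨ_deriv
  have h_second := frobSq_vecMulVec_mulVec_smul_le (w := w) hη_le hη_grad hΨ_le
  have hh : DifferentiableAt ℝ h x := differentiableAt_mulVec hΨ (hη.smul hw)
  rw [cutoffCommutator, cutoffCommutator_eq hη hw hh]
  calc _ ≤ 2 * |lameForm α (Matrix.vecMulVec (w x) (grad η x)) (jac h x)| +
        2 * |lameForm α (jac w x) (Matrix.vecMulVec (h x) (grad η x))| := by
        rw [← mul_add]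
        gcongr
        exact abs_sub _ _
    _ ≤ (1 + |α| * 3) * (r * (s * (C₁ * r ^ 2)) + r⁻¹ * ((2 * C₂ + 4 * C₁ * C₂) * (r ^ 4 * s) +
          4 * C₂ * (r ^ 2 * F))) +
        (1 + |α| * 3) * (r * F + r⁻¹ * (C₁ * C₂ * (r ^ 4 * s))) :=
        add_le_add (two_mul_abs_lameForm_le_of_le hr h_first h_jac)
          (two_mul_abs_lameForm_le_of_le hr le_rfl h_second)
    _ = (1 + |α| * 3) * ((1 + C₁ + 4 * C₂ + 5 * (C₁ * C₂)) * (r ^ 3 * s + r * F) -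
          ((1 + 2 * C₂) * (r ^ 3 * s) + (C₁ + 5 * (C₁ * C₂)) * (r * F))) := by
        field_simp
        ring
    _ ≤ (1 + |α| * 3) * ((1 + C₁ + 4 * C₂ + 5 * (C₁ * C₂)) * (r ^ 3 * s + r * F)) := by
        gcongr
        exact sub_le_self _ (by positivity)

lemma cutoffCommutator_eq_zero (hη : η =ᶠ[nhds x] fun _ => 1) :
    cutoffCommutator α η Ψ w x = 0 := by
  have h_smul (A : E3 → Fin 3 → ℝ) : jac (fun z => η z • A z) x = jac A x :=
    jac_congr (hη.mono fun z hz => by simp only [hz, one_smul])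
  rw [cutoffCommutator, h_smul, h_smul, sub_self]

lemma exists_abs_cutoffCommutator_le (α : ℝ) (hC₁ : 0 ≤ C₁) :
    ∃ C, 0 ≤ C ∧ ∀ ⦃ρ η y d Ψ⦄, 0 < ρ → IsCutoff C₁ ρ η → IsDesingularization α y d Ψ →
      ‖y‖ < ρ / 2 → closedBall y d ⊆ ball 0 ρ → ∀ w : E3 → Fin 3 → ℝ, Differentiable ℝ w → ∀ x,
      |cutoffCommutator α η Ψ w x| ≤ C * density (ρ⁻¹ ^ 3) ρ⁻¹ w x := by
  obtain ⟨C₂, hC₂, h_Phi⟩ := exists_Phi_le_of_half_le_norm α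
  refine ⟨(1 + |α| * 3) * (1 + C₁ + 4 * C₂ + 5 * (C₁ * C₂)), by positivity,
    fun ρ η y d Ψ hρ hη hΨ hy h_ball w hw x => ?_⟩
  have h_density : 0 ≤ density (ρ⁻¹ ^ 3) ρ⁻¹ w x :=
    density_nonneg (by positivity) (by positivity) _ _
  by_cases hx : x ∈ ball (0 : E3) (5 / 4 * ρ)
  · rw [cutoffCommutator_eq_zero (hη.eventuallyEq_one hx), abs_zero]
    positivity
  · have hx_norm : ρ ≤ ‖x‖ := by linarith [mem_ball_zero_iff.not.mp hx]
    obtain ⟨hΨ_le, hΨ_deriv⟩ := hΨ.bounds hy h_ball (h_Phi ρ hρ) hx_norm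
    have h_two := two_mul_abs_cutoffCommutator_le (α := α) (hη.differentiableAt x) (hw x)
      (hΨ.contDiff.contDiffAt.differentiableAt (by simp)) (inv_pos.mpr hρ)
      (pow_le_one₀ (hη.nonneg x) (hη.le_one x)) (hη.grad_le x) hΨ_le hΨ_deriv
    rw [mul_assoc]
    linarith [abs_nonneg (cutoffCommutator α η Ψ w x)]

end Commutator

/-! ### The energy of a localized approximation -/

section EnergyUpperBound

variable {α C₁ ρ d : ℝ} {y : E3} {Ω U : Set E3} {η : E3 → ℝ} {u v w g : E3 → Fin 3 → ℝ}
  {Ψ T : E3 → Fin 3 → Fin 3 → ℝ} {x : E3}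

/-- `u ∈ H̊¹(Ω)` solves the homogeneous Lamé system in `Ω ∩ B_{2ρ}`. -/
structure IsLocalSolution (α : ℝ) (Ω : Set E3) (ρ : ℝ) (u : E3 → Fin 3 → ℝ) : Prop where
  isOpen : IsOpen Ω
  memH10 : MemH10 Ω u
  radius_pos : 0 < ρ
  lame_eq_zero : ∀ x ∈ Ω ∩ ball 0 (2 * ρ), lame α u x = 0

/-- The scale-invariant square of the `H¹` norm on `Ω ∩ B_{2ρ}`,
`ρ⁻³ ∫ |u|² + ρ⁻¹ ∫ |Du|²`. -/
def scaledEnergy (Ω : Set E3) (ρ : ℝ) (u : E3 → Fin 3 → ℝ) : ℝ :=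
  ∫ x in Ω ∩ ball 0 (2 * ρ), density (ρ⁻¹ ^ 3) ρ⁻¹ u x

lemma lame_congr (h : u =ᶠ[nhds x] v) : lame α u x = lame α v x := by
  have h_pd {f g : E3 → ℝ} (hfg : f =ᶠ[nhds x] g) (k : Fin 3) : pd k f =ᶠ[nhds x] pd k g :=
    hfg.eventuallyEq_nhds.mono fun z hz => congrFun (grad_congr hz) k
  have h_comp (k : Fin 3) : (fun z => u z k) =ᶠ[nhds x] fun z => v z k :=
    h.mono fun z hz => congrFun hz k
  have h_divg : divg u =ᶠ[nhds x] divg v :=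
    h.eventuallyEq_nhds.mono fun z hz => congrArg Matrix.trace (jac_congr hz)
  funext i
  have h_lap : lap (fun z => u z i) x = lap (fun z => v z i) x :=
    Finset.sum_congr rfl fun k _ => (h_pd (h_pd (h_comp i) k) k).eq_of_nhds
  rw [lame, lame, h_lap, (h_pd h_divg i).eq_of_nhds]

lemma lameEnergy_eq_integral_lameForm (hv : IsTestOn U v) (hΨ : IsDesingularization α y d Ψ)
    (h_lame : ∀ x ∈ ball y d, lame α v x = 0) :
    lameEnergy α v y = ∫ x, lameForm α (jac v x) (jac (fun z => Ψ z *ᵥ v z) x) := by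
  rw [integral_lameForm (fun x _ => hv.1.contDiffAt) (hv.mulVec hΨ.contDiff)]
  refine integral_congr_ae (ae_of_all _ fun x => ?_)
  by_cases hx : x ∈ ball y d
  · simp [h_lame x hx]
  · simp only [hΨ.eq_Phi x hx, dotProduct, Matrix.mulVec, Finset.mul_sum, mul_assoc]

lemma IsLocalSolution.integral_lameForm_eq_zero (hu : IsLocalSolution α Ω ρ u)
    (hg : IsTestOn (Ω ∩ ball 0 (2 * ρ)) g) : ∫ x, lameForm α (jac u x) (jac g x) = 0 := by
  rw [integral_lameForm (fun x hx => hu.memH10.contDiffAt hu.isOpen hx.1) hg]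
  refine integral_eq_zero_of_ae (ae_of_all _ fun x => ?_)
  by_cases hx : x ∈ Ω ∩ ball 0 (2 * ρ)
  · simp [hu.lame_eq_zero x hx]
  · simp [image_eq_zero_of_notMem_tsupport fun h => hx (hg.2.2 h)]

lemma IsCutoff.isTestOn_smul (hη : IsCutoff C₁ ρ η) (hg : IsTestOn Ω g) :
    IsTestOn (Ω ∩ ball 0 (2 * ρ)) fun z => η z • g z :=
  ⟨hη.contDiff.smul hg.1, (hg.smul hη.contDiff).2.1, Set.subset_inter (hg.smul hη.contDiff).2.2
    ((tsupport_smul_subset_left η g).trans hη.tsupport_subset)⟩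

lemma lameForm_jac_sub_left (hΩ : IsOpen Ω) (hu : MemH10 Ω u) (hw : IsTestOn Ω w)
    (hg : IsTestOn Ω g) (x : E3) :
    lameForm α (jac (u - w) x) (jac g x) =
      lameForm α (jac u x) (jac g x) - lameForm α (jac w x) (jac g x) := by
  by_cases hx : x ∈ tsupport g
  · rw [jac_sub (hu.differentiableAt hΩ (hg.2.2 hx)) (hw.differentiableAt x), lameForm_sub_left]
  · simp only [jac_eq_zero hx, lameForm_zero_right, sub_zero]

lemma integrable_cutoffCommutator (hη : IsCutoff C₁ ρ η) (hw : IsTestOn Ω w)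
    (hΨ : ContDiff ℝ ∞ Ψ) : Integrable (cutoffCommutator α η Ψ w) :=
  have hηw := hw.smul hη.contDiff
  (integrable_lameForm (fun _ _ => hηw.1.contDiffAt) (hηw.mulVec hΨ)).sub
    (integrable_lameForm (fun _ _ => hw.1.contDiffAt) ((hηw.mulVec hΨ).smul hη.contDiff))

lemma IsLocalSolution.lameEnergy_smul_eq (hu : IsLocalSolution α Ω ρ u) (hη : IsCutoff C₁ ρ η)
    (hΨ : IsDesingularization α y d Ψ) (h_ball : ball y d ⊆ Ω ∩ ball 0 ρ) (hw : IsTestOn Ω w)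
    (h_eq : Set.EqOn w u (ball y d)) :
    lameEnergy α (fun z => η z • w z) y = (∫ x, cutoffCommutator α η Ψ w x) -
      ∫ x, lameForm α (jac (u - w) x) (jac (fun z => η z • (Ψ z *ᵥ (η z • w z))) x) := by
  have hηw := hw.smul hη.contDiff
  have hh := hηw.mulVec hΨ.contDiff
  have hg := hh.smul hη.contDiff
  have h_lame : ∀ x ∈ ball y d, lame α (fun z => η z • w z) x = 0 := fun x hx => by
    have h_near : (fun z => η z • w z) =ᶠ[nhds x] u := by
      filter_upwards [isOpen_ball.mem_nhds hx] with z hz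
      have h_radius := mem_ball_zero_iff.mp (h_ball hz).2
      rw [hη.eq_one z (mem_ball_zero_iff.mpr (by linarith [hu.radius_pos])), one_smul, h_eq hz]
    rw [lame_congr h_near]
    exact hu.lame_eq_zero x ⟨(h_ball hx).1,
      ball_subset_ball (by linarith [hu.radius_pos]) (h_ball hx).2⟩
  have h_int_u := integrable_lameForm (α := α)
    (fun x hx => hu.memH10.contDiffAt hu.isOpen hx) hg
  have h_int_w := integrable_lameForm (α := α) (fun x _ => hw.1.contDiffAt) hg
  have h_comm : ∫ x, cutoffCommutator α η Ψ w x = _ - _ :=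
    integral_sub (integrable_lameForm (fun x _ => hηw.1.contDiffAt) hh) h_int_w
  rw [lameEnergy_eq_integral_lameForm hηw hΨ h_lame, h_comm]
  simp only [lameForm_jac_sub_left hu.isOpen hu.memH10 hw hg]
  rw [integral_sub h_int_u h_int_w, hu.integral_lameForm_eq_zero (hη.isTestOn_smul hh)]
  ring

lemma cutoffCommutator_eq_zero_of_notMem (hη : IsCutoff C₁ ρ η) (hw : IsTestOn Ω w)
    (hΨ : ContDiff ℝ ∞ Ψ) (hx : x ∉ Ω ∩ ball 0 (2 * ρ)) : cutoffCommutator α η Ψ w x = 0 := by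
  have h_jac {h : E3 → Fin 3 → ℝ} (hh : tsupport h ⊆ Ω ∩ ball 0 (2 * ρ)) : jac h x = 0 :=
    jac_eq_zero fun hx' => hx (hh hx')
  have hηw := hη.isTestOn_smul hw
  simp only [cutoffCommutator, h_jac hηw.2.2,
    h_jac ((hηw.mulVec hΨ).smul hη.contDiff).2.2, lameForm_zero_left, lameForm_zero_right, sub_zero]

lemma exists_frobSq_jac_mulVec_le_density (hT : ContDiff ℝ ∞ T) (h_supp : HasCompactSupport T) :
    ∃ B, 0 ≤ B ∧ ∀ w : E3 → Fin 3 → ℝ, Differentiable ℝ w → ∀ x,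
      frobSq (jac (fun z => T z *ᵥ w z) x) ≤ B * density 1 1 w x := by
  have h_deriv_supp : HasCompactSupport (derivSq T) := HasCompactSupport.intro h_supp fun x hx => by
    rw [derivSq_congr (notMem_tsupport_iff_eventuallyEq.mp hx)]
    exact Finset.sum_eq_zero fun i _ => by
      rw [jac_eq_zero (by simp [tsupport]), frobSq_zero]
  obtain ⟨A, hA⟩ := (continuous_derivSq hT).bounded_above_of_compact_support h_deriv_supp
  obtain ⟨B, hB⟩ := (continuous_frobSq.comp hT.continuous).bounded_above_of_compact_support
    (h_supp.comp_left frobSq_zero)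
  refine ⟨2 * (|A| + |B|), by positivity, fun w hw x => ?_⟩
  have h_sq := sqSum_nonneg (w x)
  have h_frob := frobSq_nonneg (jac w x)
  have hA' : derivSq T x ≤ |A| := (le_abs_self _).trans ((hA x).trans (le_abs_self A))
  have hB' : frobSq (T x) ≤ |B| := (le_abs_self _).trans ((hB x).trans (le_abs_self B))
  calc _ ≤ 2 * (derivSq T x * sqSum (w x) + frobSq (T x) * frobSq (jac w x)) :=
        frobSq_jac_mulVec_le (hT.contDiffAt.differentiableAt (by simp)) (hw x)
    _ ≤ 2 * ((|A| + |B|) * sqSum (w x) + (|A| + |B|) * frobSq (jac w x)) := by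
        gcongr
        · exact hA'.trans (le_add_of_nonneg_right (abs_nonneg B))
        · exact hB'.trans (le_add_of_nonneg_left (abs_nonneg A))
    _ = _ := by
        rw [density]
        ring

lemma MemH10.exists_abs_integral_error_le (hΩ : IsOpen Ω) (hu : MemH10 Ω u)
    (hT : ContDiff ℝ ∞ T) (h_supp : HasCompactSupport T) (α : ℝ) :
    ∃ K, ∀ t, 0 < t → t ≤ 1 → ∀ w, IsApprox Ω u (t ^ 2) w →
      2 * |∫ x, lameForm α (jac (u - w) x) (jac (fun z => T z *ᵥ w z) x)| ≤ K * t := by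
  obtain ⟨B, hB, h_jac⟩ := exists_frobSq_jac_mulVec_le_density hT h_supp
  set S := ∫ x in Ω, density 1 1 u x
  refine ⟨(1 + |α| * 3) * (1 + B * (2 * S + 4)), fun t ht ht_le w hw => ?_⟩
  have h_dist : ∫ x in Ω, density 1 1 (u - w) x ≤ t ^ 2 := hw.integral_lt.le
  have h_approx : ∫ x in Ω, density 1 1 w x ≤ 2 * S + 4 := by
    have h_le := hw.setIntegral_density_le hΩ hu hΩ.measurableSet subset_rfl zero_le_one zero_le_one
    have h_sq : t ^ 2 ≤ 1 := pow_le_one₀ ht.le ht_le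
    linarith
  have h_bound : IntegrableOn (fun x => (1 + |α| * 3) *
      (t⁻¹ * density 1 1 (u - w) x + t * (B * density 1 1 w x))) Ω :=
    (((hu.integrableOn_density_sub hΩ hw.test).const_mul _).add
      ((hw.test.integrable_density.integrableOn.const_mul B).const_mul t)).const_mul _
  have h_restrict : ∀ x ∉ Ω, lameForm α (jac (u - w) x) (jac (fun z => T z *ᵥ w z) x) = 0 :=
    fun x hx => by
      rw [jac_eq_zero fun h => hx ((hw.test.mulVec hT).2.2 h), lameForm_zero_right]
  rw [← setIntegral_eq_integral_of_forall_compl_eq_zero h_restrict]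
  calc _ = |∫ x in Ω, 2 * lameForm α (jac (u - w) x) (jac (fun z => T z *ᵥ w z) x)| := by
        rw [integral_const_mul, abs_mul, abs_two]
    _ ≤ ∫ x in Ω, (1 + |α| * 3) *
          (t⁻¹ * density 1 1 (u - w) x + t * (B * density 1 1 w x)) := by
        rw [← Real.norm_eq_abs]
        refine norm_integral_le_of_norm_le h_bound (ae_of_all _ fun x => ?_)
        rw [norm_mul, Real.norm_ofNat, Real.norm_eq_abs]
        have h_frob : frobSq (jac (u - w) x) ≤ density 1 1 (u - w) x := by
          rw [density, one_mul, one_mul]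
          exact le_add_of_nonneg_left (sqSum_nonneg _)
        simpa only [inv_inv] using two_mul_abs_lameForm_le_of_le (inv_pos.mpr ht) h_frob
          (h_jac w hw.test.differentiableAt x)
    _ = (1 + |α| * 3) * (t⁻¹ * (∫ x in Ω, density 1 1 (u - w) x) +
          t * (B * ∫ x in Ω, density 1 1 w x)) := by
        rw [integral_const_mul, integral_add ((hu.integrableOn_density_sub hΩ hw.test).const_mul _)
          ((hw.test.integrable_density.integrableOn.const_mul B).const_mul t), integral_const_mul,
          integral_const_mul, integral_const_mul]
    _ ≤ (1 + |α| * 3) * (t⁻¹ * t ^ 2 + t * (B * (2 * S + 4))) := by gcongr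
    _ = _ := by
        field_simp

lemma exists_integral_cutoffCommutator_le (α : ℝ) (hC₁ : 0 ≤ C₁) :
    ∃ C, 0 ≤ C ∧ ∀ ⦃ρ η y d Ψ Ω⦄, 0 < ρ → IsOpen Ω → IsCutoff C₁ ρ η →
      IsDesingularization α y d Ψ → ‖y‖ < ρ / 2 → closedBall y d ⊆ ball 0 ρ →
      ∀ w, IsTestOn Ω w → ∫ x, cutoffCommutator α η Ψ w x ≤ C * scaledEnergy Ω ρ w := by
  obtain ⟨C, hC, h_comm⟩ := exists_abs_cutoffCommutator_le α hC₁
  refine ⟨C, hC, fun ρ η y d Ψ Ω hρ hΩ hη hΨ hy h_ball w hw => ?_⟩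
  have h_meas : MeasurableSet (Ω ∩ ball 0 (2 * ρ)) := (hΩ.inter isOpen_ball).measurableSet
  rw [← setIntegral_eq_integral_of_forall_compl_eq_zero fun x =>
    cutoffCommutator_eq_zero_of_notMem hη hw hΨ.contDiff, scaledEnergy, ← integral_const_mul]
  exact setIntegral_mono_on (integrable_cutoffCommutator hη hw hΨ.contDiff).integrableOn
    (hw.integrable_density.integrableOn.const_mul C) h_meas
    fun x _ => (le_abs_self _).trans (h_comm hρ hη hΨ hy h_ball w hw.differentiableAt x)

lemma IsApprox.scaledEnergy_le {ε : ℝ} (hΩ : IsOpen Ω) (hu : MemH10 Ω u) (hw : IsApprox Ω u ε w)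
    (hρ : 0 < ρ) :
    scaledEnergy Ω ρ w ≤ 2 * (scaledEnergy Ω ρ u + (ρ⁻¹ ^ 3 + ρ⁻¹) * ε) :=
  hw.setIntegral_density_le hΩ hu (hΩ.inter isOpen_ball).measurableSet Set.inter_subset_left
    (by positivity) (by positivity)

lemma exists_lameEnergy_smul_le (α : ℝ) (hC₁ : 0 ≤ C₁) :
    ∃ C, 0 ≤ C ∧ ∀ ⦃Ω ρ u η y d⦄, IsLocalSolution α Ω ρ u → IsCutoff C₁ ρ η → ‖y‖ < ρ / 2 →
      0 < d → closedBall y d ⊆ Ω ∩ ball 0 ρ →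
      ∃ K, ∀ t, 0 < t → t ≤ 1 → ∀ w, IsApprox Ω u (t ^ 2) w → Set.EqOn w u (ball y d) →
        lameEnergy α (fun z => η z • w z) y ≤ C * scaledEnergy Ω ρ u + K * t := by
  obtain ⟨C, hC, h_comm⟩ := exists_integral_cutoffCommutator_le α hC₁
  refine ⟨2 * C, by positivity, fun Ω ρ u η y d hu hη hy hd h_ball => ?_⟩
  have hρ := hu.radius_pos
  obtain ⟨Ψ, hΨ⟩ := exists_isDesingularization α y hd
  have h_smooth : ContDiff ℝ ∞ fun z => η z ^ 2 • Ψ z := (hη.contDiff.pow 2).smul hΨ.contDiff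
  have h_supp : HasCompactSupport fun z => η z ^ 2 • Ψ z :=
    (hη.hasCompactSupport.comp_left (g := (· ^ 2)) (zero_pow two_ne_zero)).smul_right
  obtain ⟨K, hK⟩ := hu.memH10.exists_abs_integral_error_le hu.isOpen h_smooth h_supp α
  refine ⟨C * (2 * (ρ⁻¹ ^ 3 + ρ⁻¹)) + K / 2, fun t ht ht_le w hw h_eq => ?_⟩
  have h_field : (fun z => η z • (Ψ z *ᵥ (η z • w z))) = fun z => (η z ^ 2 • Ψ z) *ᵥ w z := by
    funext z
    change η z • (Matrix.of (Ψ z) *ᵥ (η z • w z)) = (η z ^ 2 • Matrix.of (Ψ z)) *ᵥ w z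
    rw [Matrix.mulVec_smul, smul_smul, ← sq, Matrix.smul_mulVec]
  have h_error := hK t ht ht_le w hw
  rw [← h_field] at h_error
  have h_main := h_comm hρ hu.isOpen hη hΨ hy (h_ball.trans Set.inter_subset_right) w hw.test
  have h_scaled := hw.scaledEnergy_le hu.isOpen hu.memH10 hρ
  have h_sq : t ^ 2 ≤ t := pow_le_of_le_one ht.le ht_le two_ne_zero
  rw [hu.lameEnergy_smul_eq hη hΨ (ball_subset_closedBall.trans h_ball) hw.test h_eq]
  calc _ ≤ C * (2 * (scaledEnergy Ω ρ u + (ρ⁻¹ ^ 3 + ρ⁻¹) * t)) + K * t / 2 := by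
        have h_mono : C * scaledEnergy Ω ρ w ≤
            C * (2 * (scaledEnergy Ω ρ u + (ρ⁻¹ ^ 3 + ρ⁻¹) * t)) := by
          gcongr
          exact h_scaled.trans (by gcongr)
        rw [sub_eq_add_neg]
        refine add_le_add (h_main.trans h_mono) ?_
        linarith [neg_le_abs (∫ x, lameForm α (jac (u - w) x)
          (jac (fun z => η z • (Ψ z *ᵥ (η z • w z))) x))]
    _ = _ := by ring

end EnergyUpperBound

/-! ### The local energy estimate -/

section LocalEnergyEstimate

variable {α c₀ C₁ ρ δ ε : ℝ} {x y : E3} {Ω : Set E3} {η : E3 → ℝ} {u w : E3 → Fin 3 → ℝ}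

/-- The Dirichlet energy on `Ω ∩ B_ρ` with the weight `|x|⁻¹` regularized to `(|x| + δ)⁻¹`. -/
def weightedEnergy (Ω : Set E3) (ρ δ : ℝ) (u : E3 → Fin 3 → ℝ) : ℝ :=
  ∫ x in Ω ∩ ball 0 ρ, frobSq (jac u x) * (‖x‖ + δ)⁻¹

lemma integrable_mul_inv_norm_sub {g : E3 → ℝ} (hg : Continuous g) (h_supp : HasCompactSupport g)
    (y : E3) : Integrable fun x => g x * ‖x - y‖⁻¹ := by
  have h_loc : LocallyIntegrable fun x : E3 => ‖x‖⁻¹ :=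
    locallyIntegrable_of_norm_le_rpow (C := 1) (α := 1) (by simp) (by simp)
      (Eventually.of_forall fun x => by rw [Real.rpow_neg_one, norm_inv, norm_norm, one_mul])
      measurable_norm.inv.aestronglyMeasurable
  have h_translate := h_loc.integrable_smul_left_of_hasCompactSupport
    (hg.comp (continuous_add_const y)) (h_supp.comp_homeomorph (Homeomorph.addRight y))
  simpa using h_translate.comp_sub_right y

lemma IsCutoff.frobSq_jac_mul_inv_le (hη : IsCutoff C₁ ρ η) (hu : DifferentiableAt ℝ u x)
    (hw : DifferentiableAt ℝ w x) (hx : x ∈ ball 0 ρ) (hδ : 0 < δ) (hy : ‖y‖ ≤ δ) (hxy : x ≠ y) :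
    frobSq (jac u x) * (‖x‖ + δ)⁻¹ ≤
      2 * (frobSq (jac (fun z => η z • w z) x) * ‖x - y‖⁻¹ + density 0 δ⁻¹ (u - w) x) := by
  have hρ := pos_of_mem_ball hx
  have h_near : (fun z => η z • w z) =ᶠ[nhds x] w := by
    filter_upwards [isOpen_ball.mem_nhds hx] with z hz
    rw [hη.eq_one z (ball_subset_ball (by linarith) hz), one_smul]
  have h_pos : 0 < ‖x - y‖ := norm_sub_pos_iff.mpr hxy
  have h_split : frobSq (jac u x) ≤ 2 * (frobSq (jac w x) + frobSq (jac (u - w) x)) := by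
    simpa only [jac_sub hu hw, add_sub_cancel] using
      frobSq_add_le (jac w x) (jac u x - jac w x)
  rw [jac_congr h_near, density, zero_mul, zero_add, mul_comm δ⁻¹]
  calc frobSq (jac u x) * (‖x‖ + δ)⁻¹
      ≤ 2 * (frobSq (jac w x) + frobSq (jac (u - w) x)) * (‖x‖ + δ)⁻¹ := by gcongr
    _ = 2 * (frobSq (jac w x) * (‖x‖ + δ)⁻¹ + frobSq (jac (u - w) x) * (‖x‖ + δ)⁻¹) := by ring
    _ ≤ _ := by
        gcongr
        · exact frobSq_nonneg _
        · exact (norm_sub_le x y).trans (by linarith)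
        · exact frobSq_nonneg _
        · exact le_add_of_nonneg_left (norm_nonneg x)

lemma MemH10.integrableOn_frobSq_mul_inv (hΩ : IsOpen Ω) (hu : MemH10 Ω u) (hδ : 0 < δ) :
    IntegrableOn (fun x => frobSq (jac u x) * (‖x‖ + δ)⁻¹) Ω := by
  refine (hu.integrableOn_frobSq hΩ).mul_bdd (c := δ⁻¹)
    (by fun_prop : Measurable fun x : E3 => (‖x‖ + δ)⁻¹).aestronglyMeasurable
    (ae_of_all _ fun x => ?_)
  rw [norm_inv, Real.norm_of_nonneg (by positivity)]
  exact inv_anti₀ hδ (le_add_of_nonneg_left (norm_nonneg x))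

lemma weightedEnergy_nonneg (hδ : 0 ≤ δ) : 0 ≤ weightedEnergy Ω ρ δ u :=
  integral_nonneg fun x => mul_nonneg (frobSq_nonneg _) (by positivity)

lemma IsApprox.weightedEnergy_le (hΩ : IsOpen Ω) (hu : MemH10 Ω u) (hη : IsCutoff C₁ ρ η)
    (hδ : 0 < δ) (hy : ‖y‖ ≤ δ) (hw : IsApprox Ω u ε w) :
    weightedEnergy Ω ρ δ u ≤
      2 * ((∫ x, frobSq (jac (fun z => η z • w z) x) * ‖x - y‖⁻¹) + δ⁻¹ * ε) := by
  have hηw := hw.test.smul hη.contDiff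
  have h_energy : Integrable fun x => frobSq (jac (fun z => η z • w z) x) * ‖x - y‖⁻¹ :=
    integrable_mul_inv_norm_sub (continuous_frobSq.comp (continuous_jac hηw.1))
      (HasCompactSupport.intro hηw.2.1 fun x hx => by
        rw [Function.comp_apply, jac_eq_zero hx, frobSq_zero]) y
  have h_sub : IntegrableOn (density 0 δ⁻¹ (u - w)) (Ω ∩ ball 0 ρ) :=
    (hu.integrableOn_density_sub hΩ hw.test).mono_set Set.inter_subset_left
  calc weightedEnergy Ω ρ δ u
      ≤ ∫ x in Ω ∩ ball 0 ρ, 2 * (frobSq (jac (fun z => η z • w z) x) * ‖x - y‖⁻¹ +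
          density 0 δ⁻¹ (u - w) x) := by
        refine integral_mono_ae
          ((hu.integrableOn_frobSq_mul_inv hΩ hδ).mono_set Set.inter_subset_left)
          ((h_energy.integrableOn.add h_sub).const_mul 2) ?_
        filter_upwards [ae_restrict_mem (hΩ.inter isOpen_ball).measurableSet,
          ae_restrict_of_ae (Measure.ae_ne volume y)] with x hx hxy
        exact hη.frobSq_jac_mul_inv_le (hu.differentiableAt hΩ hx.1)
          (hw.test.differentiableAt x) hx.2 hδ hy hxy
    _ = 2 * ((∫ x in Ω ∩ ball 0 ρ, frobSq (jac (fun z => η z • w z) x) * ‖x - y‖⁻¹) +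
          ∫ x in Ω ∩ ball 0 ρ, density 0 δ⁻¹ (u - w) x) := by
        rw [integral_const_mul, integral_add h_energy.integrableOn h_sub]
    _ ≤ _ := by
        refine mul_le_mul_of_nonneg_left (add_le_add ?_ ?_) zero_le_two
        · exact setIntegral_le_integral h_energy
            (ae_of_all _ fun x => mul_nonneg (frobSq_nonneg _) (by positivity))
        · simpa only [zero_add] using hw.setIntegral_density_sub_le hΩ hu
            (Set.inter_subset_left (t := ball 0 ρ)) le_rfl (inv_nonneg.mpr hδ.le)

lemma IsApprox.sqSum_add_weightedEnergy_le_lameEnergy (hc₀ : 0 ≤ c₀) (hQPD : QPDhyp α c₀)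
    (hΩ : IsOpen Ω) (hu : MemH10 Ω u) (hη : IsCutoff C₁ ρ η) (hδ : 0 < δ) (hyδ : ‖y‖ ≤ δ)
    (hyρ : y ∈ ball 0 ρ) (hw : IsApprox Ω u ε w) (hwy : w y = u y) :
    (1 / 2) * sqSum (u y) + c₀ * (weightedEnergy Ω ρ δ u / 2 - δ⁻¹ * ε) ≤
      lameEnergy α (fun z => η z • w z) y := by
  have hρ := pos_of_mem_ball hyρ
  have h_value : η y • w y = u y := by
    rw [hη.eq_one y (ball_subset_ball (by linarith) hyρ), one_smul, hwy]
  have h_test := (hw.test.smul hη.contDiff).mono (Set.subset_univ Ω)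
  have h_pos : (1 / 2) * sqSum (η y • w y) +
      c₀ * (∫ x, frobSq (jac (fun z => η z • w z) x) * ‖x - y‖⁻¹) ≤ _ := hQPD _ h_test y
  rw [h_value] at h_pos
  refine le_trans ?_ h_pos
  gcongr
  linarith [hw.weightedEnergy_le hΩ hu hη hδ hyδ]

lemma exists_closedBall_subset_inter (hΩ : IsOpen Ω) (hy : y ∈ Ω) (hyρ : y ∈ ball 0 ρ) :
    ∃ d, 0 < d ∧ closedBall y d ⊆ Ω ∩ ball 0 ρ ∧ closedBall y (2 * d) ⊆ Ω := by
  obtain ⟨r, hr, h_ball⟩ := nhds_basis_closedBall.mem_iff.mp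
    ((hΩ.inter isOpen_ball).mem_nhds ⟨hy, hyρ⟩)
  refine ⟨r / 2, by positivity, (closedBall_subset_closedBall (by linarith)).trans h_ball, ?_⟩
  rw [mul_div_cancel₀ r two_ne_zero]
  exact h_ball.trans Set.inter_subset_left

theorem exists_sqSum_add_weightedEnergy_le (hc₀ : 0 < c₀) (hQPD : QPDhyp α c₀) :
    ∃ C, 0 ≤ C ∧ ∀ ⦃Ω ρ u⦄, IsLocalSolution α Ω ρ u → ∀ ⦃y⦄, y ∈ Ω → ‖y‖ < ρ / 2 →
      ∀ ⦃δ⦄, 0 < δ → ‖y‖ ≤ δ →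
        sqSum (u y) + c₀ * weightedEnergy Ω ρ δ u ≤ C * scaledEnergy Ω ρ u := by
  obtain ⟨C₁, hC₁, h_cutoff⟩ := exists_cutoff
  obtain ⟨C, hC, h_upper⟩ := exists_lameEnergy_smul_le α hC₁
  refine ⟨2 * C, by positivity, fun Ω ρ u hu y hyΩ hyρ δ hδ hyδ => ?_⟩
  have hρ := hu.radius_pos
  have hy_mem : y ∈ ball 0 ρ := mem_ball_zero_iff.mpr (by linarith)
  obtain ⟨η, hη⟩ := h_cutoff ρ hρ
  obtain ⟨d, hd, hd_inter, hd_two⟩ := exists_closedBall_subset_inter hu.isOpen hyΩ hy_mem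
  obtain ⟨K, hK⟩ := h_upper hu hη hyρ hd hd_inter
  have h_approx (t : ℝ) (ht : 0 < t) (ht_le : t ≤ 1) :
      (1 / 2) * sqSum (u y) + c₀ * (weightedEnergy Ω ρ δ u / 2 - δ⁻¹ * t ^ 2) ≤
        C * scaledEnergy Ω ρ u + K * t := by
    obtain ⟨w, hw, h_eq⟩ := hu.memH10.exists_isApprox_eqOn_ball hu.isOpen hd hd_two
      (pow_pos ht 2)
    exact (hw.sqSum_add_weightedEnergy_le_lameEnergy hc₀.le hQPD hu.isOpen hu.memH10 hη hδ hyδ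
      hy_mem (h_eq (mem_ball_self hd))).trans (hK t ht ht_le w hw h_eq)
  have h_lhs : Tendsto (fun t : ℝ => (1 / 2) * sqSum (u y) +
      c₀ * (weightedEnergy Ω ρ δ u / 2 - δ⁻¹ * t ^ 2)) (nhdsWithin 0 (Set.Ioi 0))
      (nhds ((1 / 2) * sqSum (u y) + c₀ * (weightedEnergy Ω ρ δ u / 2))) :=
    (Continuous.tendsto' (by fun_prop) _ _ (by ring)).mono_left nhdsWithin_le_nhds
  have h_rhs : Tendsto (fun t : ℝ => C * scaledEnergy Ω ρ u + K * t) (nhdsWithin 0 (Set.Ioi 0))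
      (nhds (C * scaledEnergy Ω ρ u)) :=
    (Continuous.tendsto' (by fun_prop) _ _ (by ring)).mono_left nhdsWithin_le_nhds
  have h_limit := le_of_tendsto_of_tendsto h_lhs h_rhs <| by
    filter_upwards [Ioc_mem_nhdsGT one_pos] with t ht using h_approx t ht.1 ht.2
  linarith

end LocalEnergyEstimate

/-! ### The Poincaré inequality on convex sets -/

section Poincare

variable {E F : Type*} [NormedAddCommGroup E] [NormedSpace ℝ E] [NormedAddCommGroup F]
  [NormedSpace ℝ F] {f : E → F} {p : ℝ}

lemma lintegral_rpow_le_lintegral_rpow {X : Type*} [MeasurableSpace X] {μ : Measure X}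
    [IsProbabilityMeasure μ] {g : X → ENNReal} (hg : AEMeasurable g μ) (hp : 1 ≤ p) :
    (∫⁻ x, g x ∂μ) ^ p ≤ ∫⁻ x, g x ^ p ∂μ := by
  have hp_pos : 0 < p := one_pos.trans_le hp
  have h_mono := eLpNorm'_le_eLpNorm'_of_exponent_le one_pos hp μ hg.aestronglyMeasurable
  simp only [eLpNorm', enorm_eq_self, ENNReal.rpow_one, div_one] at h_mono
  rwa [one_div, ENNReal.le_rpow_inv_iff hp_pos] at h_mono

lemma enorm_sub_rpow_le_lintegral_segment (hf : ContDiff ℝ 1 f) (hp : 1 ≤ p) (x y : E) :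
    ‖f x - f y‖ₑ ^ p ≤ edist x y ^ p *
      ∫⁻ t in Set.Icc (0 : ℝ) 1, ‖fderiv ℝ f (t • x + (1 - t) • y)‖ₑ ^ p := by
  have hp_nonneg : 0 ≤ p := zero_le_one.trans hp
  have h_deriv (t : ℝ) : HasDerivAt (fun t : ℝ => f (t • x + (1 - t) • y))
      (fderiv ℝ f (t • x + (1 - t) • y) (x - y)) t := by
    have h_line := ((hasDerivAt_id t).smul_const x).add
      (((hasDerivAt_id t).const_sub 1).smul_const y)
    simp only [one_smul, neg_smul, ← sub_eq_add_neg] at h_line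
    exact (hf.differentiable one_ne_zero _).hasFDerivAt.comp_hasDerivAt t h_line
  have h_cont : Continuous fun t : ℝ => fderiv ℝ f (t • x + (1 - t) • y) :=
    (hf.continuous_fderiv one_ne_zero).comp (by fun_prop)
  have : IsProbabilityMeasure (volume.restrict (Set.Icc (0 : ℝ) 1)) := ⟨by simp⟩
  have h_ftc : ‖f x - f y‖ₑ ≤ edist x y *
      ∫⁻ t in Set.Icc (0 : ℝ) 1, ‖fderiv ℝ f (t • x + (1 - t) • y)‖ₑ := by
    have h_seg : ContDiff ℝ 1 fun t : ℝ => f (t • x + (1 - t) • y) := hf.comp (by fun_prop)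
    have h_le := enorm_sub_le_lintegral_deriv_of_contDiffOn_Icc h_seg.contDiffOn zero_le_one
    simp only [one_smul, sub_self, zero_smul, add_zero, sub_zero, zero_add] at h_le
    refine h_le.trans ?_
    rw [← lintegral_const_mul' _ _ (edist_ne_top x y)]
    refine lintegral_mono fun t => ?_
    rw [(h_deriv t).deriv, mul_comm, edist_eq_enorm_sub]
    exact ContinuousLinearMap.le_opENorm _ _
  calc ‖f x - f y‖ₑ ^ p
      ≤ (edist x y * ∫⁻ t in Set.Icc (0 : ℝ) 1, ‖fderiv ℝ f (t • x + (1 - t) • y)‖ₑ) ^ p := by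
        gcongr
    _ ≤ _ := by
        rw [ENNReal.mul_rpow_of_nonneg _ _ hp_nonneg]
        gcongr
        exact lintegral_rpow_le_lintegral_rpow h_cont.enorm.aemeasurable hp

variable [FiniteDimensional ℝ E] [MeasurableSpace E] [BorelSpace E] {μ : Measure E}
  [μ.IsAddHaarMeasure] {s : Set E} {G : E → ENNReal}

lemma lintegral_homothety_le (hs : Convex ℝ s) (hs_meas : MeasurableSet s) (hG : Measurable G)
    {t : ℝ} (ht : 1 / 2 ≤ t) (ht_le : t ≤ 1) {y : E} (hy : y ∈ s) :
    ∫⁻ x in s, G (t • x + (1 - t) • y) ∂μ ≤ 2 ^ Module.finrank ℝ E * ∫⁻ x in s, G x ∂μ := by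
  have ht_pos : 0 < t := by linarith
  have h_ind : Measurable (s.indicator G) := hG.indicator hs_meas
  calc ∫⁻ x in s, G (t • x + (1 - t) • y) ∂μ
      ≤ ∫⁻ x, s.indicator G (t • x + (1 - t) • y) ∂μ := by
        rw [← lintegral_indicator hs_meas]
        refine lintegral_mono (Set.indicator_le fun x hx => ?_)
        rw [Set.indicator_of_mem (hs hx hy ht_pos.le (by linarith) (by ring))]
    _ = ∫⁻ z, s.indicator G (z + (1 - t) • y) ∂(μ.map (t • ·)) :=
        (lintegral_map (h_ind.comp (measurable_add_const _)) (measurable_const_smul t)).symm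
    _ = ENNReal.ofReal (t⁻¹ ^ Module.finrank ℝ E) * ∫⁻ x in s, G x ∂μ := by
        rw [Measure.map_addHaar_smul _ ht_pos.ne', lintegral_smul_measure,
          lintegral_add_right_eq_self, lintegral_indicator hs_meas, ← inv_pow,
          abs_of_pos (pow_pos (inv_pos.mpr ht_pos) _), smul_eq_mul]
    _ ≤ 2 ^ Module.finrank ℝ E * ∫⁻ x in s, G x ∂μ := by
        rw [ENNReal.ofReal_pow (inv_nonneg.mpr ht_pos.le)]
        gcongr
        rw [ENNReal.ofReal_le_ofNat]
        exact (inv_le_comm₀ ht_pos two_pos).mpr (by linarith)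

lemma lintegral_lintegral_segment_le (hs : Convex ℝ s) (hs_meas : MeasurableSet s)
    (hG : Measurable G) {t : ℝ} (ht : t ∈ Set.Icc (0 : ℝ) 1) :
    ∫⁻ y in s, ∫⁻ x in s, G (t • x + (1 - t) • y) ∂μ ∂μ ≤
      μ s * (2 ^ Module.finrank ℝ E * ∫⁻ x in s, G x ∂μ) := by
  have h_const {H : E → ENNReal}
      (hH : ∀ y ∈ s, H y ≤ 2 ^ Module.finrank ℝ E * ∫⁻ x in s, G x ∂μ) :
      ∫⁻ y in s, H y ∂μ ≤ μ s * (2 ^ Module.finrank ℝ E * ∫⁻ x in s, G x ∂μ) :=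
    (setLIntegral_mono' hs_meas hH).trans_eq (by rw [setLIntegral_const, mul_comm])
  rcases le_total (1 / 2) t with h_half | h_half
  · exact h_const fun y => lintegral_homothety_le hs hs_meas hG h_half ht.2
  · have h_joint : Measurable fun q : E × E => G (t • q.2 + (1 - t) • q.1) :=
      hG.comp (by fun_prop)
    rw [lintegral_lintegral_swap h_joint.aemeasurable]
    refine h_const fun x hx => ?_
    simpa only [sub_sub_cancel, add_comm] using
      lintegral_homothety_le hs hs_meas hG (by linarith) (sub_le_self 1 ht.1) hx

lemma lintegral_lintegral_const_mul_segment (c : ENNReal) (hG : Measurable G) :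
    ∫⁻ y in s, ∫⁻ x in s, (c * ∫⁻ t in Set.Icc (0 : ℝ) 1, G (t • x + (1 - t) • y)) ∂μ ∂μ =
      c * ∫⁻ t in Set.Icc (0 : ℝ) 1, ∫⁻ y in s, ∫⁻ x in s, G (t • x + (1 - t) • y) ∂μ ∂μ := by
  have h_joint : Measurable fun q : (E × ℝ) × E => G (q.1.2 • q.2 + (1 - q.1.2) • q.1.1) :=
    hG.comp (by fun_prop)
  have h_segment : Measurable fun q : E × E =>
      ∫⁻ t in Set.Icc (0 : ℝ) 1, G (t • q.2 + (1 - t) • q.1) :=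
    (hG.comp (by fun_prop : Measurable fun q : (E × E) × ℝ =>
      q.2 • q.1.2 + (1 - q.2) • q.1.1)).lintegral_prod_right'
  calc ∫⁻ y in s, ∫⁻ x in s, (c * ∫⁻ t in Set.Icc (0 : ℝ) 1, G (t • x + (1 - t) • y)) ∂μ ∂μ
      = c * ∫⁻ y in s, ∫⁻ x in s, (∫⁻ t in Set.Icc (0 : ℝ) 1, G (t • x + (1 - t) • y)) ∂μ ∂μ := by
        rw [← lintegral_const_mul _ h_segment.lintegral_prod_right']
        exact lintegral_congr fun y =>
          lintegral_const_mul _ (h_segment.comp measurable_prodMk_left)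
    _ = c * ∫⁻ y in s, (∫⁻ t in Set.Icc (0 : ℝ) 1,
          ∫⁻ x in s, G (t • x + (1 - t) • y) ∂μ) ∂μ := by
        congr 1
        refine lintegral_congr fun y => lintegral_lintegral_swap ?_
        exact (hG.comp (by fun_prop :
          Measurable fun q : E × ℝ => q.2 • q.1 + (1 - q.2) • y)).aemeasurable
    _ = _ := by rw [lintegral_lintegral_swap h_joint.lintegral_prod_right'.aemeasurable]

lemma lintegral_lintegral_enorm_sub_rpow_le (hf : ContDiff ℝ 1 f) (hp : 1 ≤ p)
    (hs : Convex ℝ s) (hs_meas : MeasurableSet s) :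
    ∫⁻ y in s, ∫⁻ x in s, ‖f x - f y‖ₑ ^ p ∂μ ∂μ ≤ ediam s ^ p *
      (μ s * (2 ^ Module.finrank ℝ E * ∫⁻ x in s, ‖fderiv ℝ f x‖ₑ ^ p ∂μ)) := by
  set G : E → ENNReal := fun x => ‖fderiv ℝ f x‖ₑ ^ p
  have hG : Measurable G := (hf.continuous_fderiv one_ne_zero).enorm.measurable.pow_const p
  calc ∫⁻ y in s, ∫⁻ x in s, ‖f x - f y‖ₑ ^ p ∂μ ∂μ
      ≤ ∫⁻ y in s, ∫⁻ x in s, (ediam s ^ p *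
          ∫⁻ t in Set.Icc (0 : ℝ) 1, G (t • x + (1 - t) • y)) ∂μ ∂μ := by
        refine setLIntegral_mono' hs_meas fun y hy => setLIntegral_mono' hs_meas fun x hx =>
          (enorm_sub_rpow_le_lintegral_segment hf hp x y).trans ?_
        gcongr
        exact edist_le_ediam_of_mem hx hy
    _ = ediam s ^ p * ∫⁻ t in Set.Icc (0 : ℝ) 1, ∫⁻ y in s, ∫⁻ x in s,
          G (t • x + (1 - t) • y) ∂μ ∂μ := lintegral_lintegral_const_mul_segment _ hG
    _ ≤ ediam s ^ p * ∫⁻ _ in Set.Icc (0 : ℝ) 1,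
          μ s * (2 ^ Module.finrank ℝ E * ∫⁻ x in s, G x ∂μ) := by
        gcongr 1
        exact setLIntegral_mono' measurableSet_Icc
          fun t => lintegral_lintegral_segment_le hs hs_meas hG
    _ = _ := by simp

theorem exists_lintegral_enorm_sub_rpow_le (hf : ContDiff ℝ 1 f) (hp : 1 ≤ p)
    (hs : Convex ℝ s) (hs_meas : MeasurableSet s) (hs_pos : μ s ≠ 0) (hs_top : μ s ≠ ⊤) :
    ∃ a ∈ s, ∫⁻ x in s, ‖f x - f a‖ₑ ^ p ∂μ ≤
      2 ^ Module.finrank ℝ E * ediam s ^ p * ∫⁻ x in s, ‖fderiv ℝ f x‖ₑ ^ p ∂μ := by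
  have h_meas : Measurable fun q : E × E => ‖f q.2 - f q.1‖ₑ ^ p :=
    (((hf.continuous.comp continuous_snd).sub
      (hf.continuous.comp continuous_fst)).enorm.measurable).pow_const p
  obtain ⟨a, ha, h_le⟩ := exists_le_setLAverage hs_pos hs_top
    (h_meas.lintegral_prod_right' (ν := μ.restrict s)).aemeasurable
  refine ⟨a, ha, h_le.trans ?_⟩
  rw [setLAverage_eq, ENNReal.div_le_iff hs_pos hs_top]
  exact (lintegral_lintegral_enorm_sub_rpow_le hf hp hs hs_meas).trans_eq (by ring)

end Poincare

/-! ### Harmonic capacity -/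

section BallPoincare

variable {f : E3 → ℝ} {r : ℝ} {c : E3}

lemma norm_fderiv_sq_le (f : E3 → ℝ) (x : E3) : ‖fderiv ℝ f x‖ ^ 2 ≤ sqSum (grad f x) := by
  have h_apply (v : E3) : fderiv ℝ f x v = ∑ k, v k * grad f x k := by
    conv_lhs => rw [← (EuclideanSpace.basisFun (Fin 3) ℝ).sum_repr v]
    simp [grad, pd]
  refine (Real.le_sqrt (norm_nonneg _) (sqSum_nonneg _)).mp ?_
  refine ContinuousLinearMap.opNorm_le_bound _ (Real.sqrt_nonneg _) fun v => ?_
  rw [h_apply, Real.norm_eq_abs, mul_comm]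
  refine Real.abs_le_sqrt (Finset.sum_mul_sq_le_sq_mul_sq _ _ _) |>.trans_eq ?_
  rw [Real.sqrt_mul (by positivity), ← EuclideanSpace.real_norm_sq_eq, Real.sqrt_sq (norm_nonneg v)]
  rfl

lemma integrableOn_ball_of_continuous (hf : Continuous f) (c : E3) (r : ℝ) :
    IntegrableOn f (ball c r) :=
  (hf.continuousOn.integrableOn_compact (isCompact_closedBall c r)).mono_set
    ball_subset_closedBall

lemma volume_real_ball (c : E3) (hr : 0 ≤ r) : volume.real (ball c r) = 4 / 3 * π * r ^ 3 := by
  rw [Measure.real, EuclideanSpace.volume_ball_fin_three, ENNReal.toReal_mul, ENNReal.toReal_pow,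
    ENNReal.toReal_ofReal hr, ENNReal.toReal_ofReal (by positivity)]
  ring

lemma ediam_ball_le {X : Type*} [PseudoMetricSpace X] (x : X) (r : ℝ) :
    ediam (ball x r) ≤ ENNReal.ofReal (2 * r) := by
  rw [← Metric.eball_ofReal, ENNReal.ofReal_mul zero_le_two, ENNReal.ofReal_ofNat]
  exact ediam_eball_le

lemma exists_setIntegral_sub_sq_le (hf : ContDiff ℝ ∞ f) (c : E3) (hr : 0 < r) :
    ∃ a, ∫ x in ball c r, (f x - a) ^ 2 ≤ 32 * r ^ 2 * ∫ x in ball c r, sqSum (grad f x) := by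
  have h_enorm (t : ℝ) : ‖t‖ₑ ^ (2 : ℝ) = ENNReal.ofReal (t ^ 2) := by
    rw [ENNReal.rpow_two, ← ofReal_norm, ← ENNReal.ofReal_pow (norm_nonneg t), Real.norm_eq_abs,
      sq_abs]
  have h_const : (2 : ENNReal) ^ 3 * ENNReal.ofReal (2 * r) ^ (2 : ℝ) =
      ENNReal.ofReal (32 * r ^ 2) := by
    rw [ENNReal.rpow_two, ← ENNReal.ofReal_ofNat 2, ← ENNReal.ofReal_pow zero_le_two,
      ← ENNReal.ofReal_pow (by positivity), ← ENNReal.ofReal_mul (by positivity)]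
    ring_nf
  obtain ⟨a, -, ha⟩ := exists_lintegral_enorm_sub_rpow_le (μ := volume)
    (hf.of_le (by simp)) one_le_two (convex_ball c r) measurableSet_ball
    (measure_ball_pos volume c hr).ne' measure_ball_lt_top.ne
  refine ⟨f a, ?_⟩
  have h_cont := hf.continuous
  have h_grad : Continuous fun x => sqSum (grad f x) := continuous_sqSum.comp (continuous_grad hf)
  have h_nonneg : 0 ≤ ∫ x in ball c r, sqSum (grad f x) :=
    integral_nonneg fun x => sqSum_nonneg _
  rw [← ENNReal.ofReal_le_ofReal_iff (by positivity), ENNReal.ofReal_mul (by positivity),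
    ofReal_integral_eq_lintegral_ofReal (integrableOn_ball_of_continuous (by fun_prop) c r)
      (ae_of_all _ fun x => sq_nonneg _),
    ofReal_integral_eq_lintegral_ofReal (integrableOn_ball_of_continuous h_grad c r)
      (ae_of_all _ fun x => sqSum_nonneg _), ← h_const]
  calc ∫⁻ x in ball c r, ENNReal.ofReal ((f x - f a) ^ 2)
      ≤ 2 ^ Module.finrank ℝ E3 * ediam (ball c r) ^ (2 : ℝ) *
          ∫⁻ x in ball c r, ‖fderiv ℝ f x‖ₑ ^ (2 : ℝ) := by simpa only [h_enorm] using ha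
    _ ≤ _ := by
        rw [finrank_euclideanSpace_fin]
        gcongr with x
        · exact ediam_ball_le c r
        · rw [← enorm_norm, h_enorm]
          exact ENNReal.ofReal_le_ofReal (norm_fderiv_sq_le f x)

end BallPoincare

section Capacity

variable {C ρ : ℝ} {K U : Set E3} {f g η : E3 → ℝ} {w : E3 → Fin 3 → ℝ} {x : E3}

lemma capa_nonneg (K : Set E3) : 0 ≤ capa K := by
  refine Real.sInf_nonneg ?_
  rintro - ⟨f, -, -, -, rfl⟩
  exact integral_nonneg fun x => sqSum_nonneg (grad f x)

lemma capa_le_integral (hf : ContDiff ℝ ∞ f) (h_supp : HasCompactSupport f) (hU : IsOpen U)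
    (hKU : K ⊆ U) (h_one : ∀ x ∈ U, f x = 1) : capa K ≤ ∫ x, sqSum (grad f x) := by
  refine csInf_le ⟨0, ?_⟩ ⟨f, hf, h_supp, ⟨U, hU, hKU, h_one⟩, rfl⟩
  rintro - ⟨f, -, -, -, rfl⟩
  exact integral_nonneg fun x => sqSum_nonneg (grad f x)

lemma IsCutoff.sqSum_grad_mul_le (hη : IsCutoff C ρ η) (hg : DifferentiableAt ℝ g x) :
    sqSum (grad (fun z => η z * g z) x) ≤
      2 * (C * ρ⁻¹ ^ 2 * g x ^ 2 + sqSum (grad g x)) := by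
  have h_sq : η x ^ 2 ≤ 1 := pow_le_one₀ (hη.nonneg x) (hη.le_one x)
  rw [grad_mul (hη.differentiableAt x) hg]
  refine (sqSum_add_le _ _).trans ?_
  rw [sqSum_smul, sqSum_smul]
  have h_cut := mul_le_mul_of_nonneg_right (hη.grad_le x) (sq_nonneg (g x))
  have h_grad := mul_le_mul_of_nonneg_right h_sq (sqSum_nonneg (grad g x))
  linarith

lemma IsCutoff.capa_le (hη : IsCutoff C ρ η) (hK : K ⊆ closedBall 0 ρ) (hρ : 0 < ρ)
    (hU : IsOpen U) (hKU : K ⊆ U) (hg : ContDiff ℝ ∞ g) (h_one : ∀ x ∈ U, g x = 1) :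
    capa K ≤ 2 * (C * ρ⁻¹ ^ 2 * (∫ x in ball (0 : E3) (2 * ρ), g x ^ 2) +
      ∫ x in ball (0 : E3) (2 * ρ), sqSum (grad g x)) := by
  have h_supp : tsupport (fun x => η x * g x) ⊆ tsupport η := tsupport_mul_subset_left
  have h_cont {h : E3 → ℝ} (hh : ContDiff ℝ ∞ h) : Continuous fun x => sqSum (grad h x) :=
    continuous_sqSum.comp (continuous_grad hh)
  have h_sq : IntegrableOn (fun x => g x ^ 2) (ball 0 (2 * ρ)) :=
    integrableOn_ball_of_continuous (hg.continuous.pow 2) 0 (2 * ρ)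
  have hK_ball : K ⊆ ball 0 (5 / 4 * ρ) := hK.trans (closedBall_subset_ball (by linarith))
  have h_grad := integrableOn_ball_of_continuous (h_cont hg) 0 (2 * ρ)
  calc capa K ≤ ∫ x, sqSum (grad (fun z => η z * g z) x) :=
        capa_le_integral (hη.contDiff.mul hg) hη.hasCompactSupport.mul_right
          (hU.inter isOpen_ball) (Set.subset_inter hKU hK_ball)
          fun x hx => by rw [hη.eq_one x hx.2, h_one x hx.1, one_mul]
    _ = ∫ x in ball (0 : E3) (2 * ρ), sqSum (grad (fun z => η z * g z) x) := by
        refine (setIntegral_eq_integral_of_forall_compl_eq_zero fun x hx => ?_).symm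
        rw [grad_eq_zero fun h => hx (hη.tsupport_subset (h_supp h)), sqSum_zero]
    _ ≤ ∫ x in ball (0 : E3) (2 * ρ), 2 * (C * ρ⁻¹ ^ 2 * g x ^ 2 + sqSum (grad g x)) :=
        integral_mono (integrableOn_ball_of_continuous (h_cont (hη.contDiff.mul hg)) 0 _)
          (((h_sq.const_mul _).add h_grad).const_mul 2)
          fun x => hη.sqSum_grad_mul_le (hg.contDiffAt.differentiableAt (by simp))
    _ = _ := by
        rw [integral_const_mul, integral_add (h_sq.const_mul _) h_grad, integral_const_mul]

/-- Admissibility of the constant `C` in the bound of the capacity of `K ⊆ B̄_ρ` by the energy of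
functions which are `1` near `K` but need not vanish on `∂B_{2ρ}`. -/
def IsLocalCapaBound (C : ℝ) : Prop :=
  ∀ ⦃ρ : ℝ⦄, 0 < ρ → ∀ ⦃K U : Set E3⦄, K ⊆ closedBall 0 ρ → IsOpen U → K ⊆ U →
    ∀ ⦃g : E3 → ℝ⦄, ContDiff ℝ ∞ g → (∀ x ∈ U, g x = 1) →
      capa K ≤ C * (ρ⁻¹ ^ 2 * (∫ x in ball (0 : E3) (2 * ρ), g x ^ 2) +
        ∫ x in ball (0 : E3) (2 * ρ), sqSum (grad g x))

lemma exists_isLocalCapaBound : ∃ C, IsLocalCapaBound C := by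
  obtain ⟨C, hC, h_cut⟩ := exists_cutoff
  refine ⟨2 * (C + 1), fun ρ hρ K U hK hU hKU g hg h_one => ?_⟩
  obtain ⟨η, hη⟩ := h_cut ρ hρ
  refine (hη.capa_le hK hρ hU hKU hg h_one).trans ?_
  have h_sq : 0 ≤ ρ⁻¹ ^ 2 * ∫ x in ball (0 : E3) (2 * ρ), g x ^ 2 :=
    mul_nonneg (sq_nonneg _) (integral_nonneg fun x => sq_nonneg _)
  have h_grad : 0 ≤ ∫ x in ball (0 : E3) (2 * ρ), sqSum (grad g x) :=
    integral_nonneg fun x => sqSum_nonneg _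
  linarith [mul_nonneg hC h_grad]

lemma IsLocalCapaBound.capa_le (hC : IsLocalCapaBound C) (hρ : 0 < ρ) (hK : K ⊆ closedBall 0 ρ) :
    capa K ≤ C * (32 / 3 * π) * ρ := by
  have h := hC hρ hK isOpen_univ (Set.subset_univ K) (contDiff_const (c := (1 : ℝ)))
    fun _ _ => rfl
  simp only [one_pow, setIntegral_const, grad_const, sqSum_zero, integral_zero, smul_eq_mul,
    mul_one, add_zero] at h
  rw [volume_real_ball _ (by positivity)] at h
  refine h.trans_eq ?_
  field_simp
  ring

lemma IsLocalCapaBound.nonneg (hC : IsLocalCapaBound C) : 0 ≤ C := by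
  have h := (capa_nonneg ∅).trans (hC.capa_le one_pos (Set.empty_subset _))
  rw [mul_one] at h
  exact nonneg_of_mul_nonneg_left h (by positivity)

lemma IsLocalCapaBound.capa_mul_sq_le (hC : IsLocalCapaBound C) (hρ : 0 < ρ)
    (hK : K ⊆ closedBall 0 ρ) (hU : IsOpen U) (hKU : K ⊆ U) (hf : ContDiff ℝ ∞ f)
    (h_zero : ∀ x ∈ U, f x = 0) (a : ℝ) :
    capa K * a ^ 2 ≤ C * (ρ⁻¹ ^ 2 * (∫ x in ball (0 : E3) (2 * ρ), (f x - a) ^ 2) +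
      ∫ x in ball (0 : E3) (2 * ρ), sqSum (grad f x)) := by
  rcases eq_or_ne a 0 with rfl | ha
  · rw [zero_pow two_ne_zero, mul_zero]
    exact mul_nonneg hC.nonneg (add_nonneg
      (mul_nonneg (sq_nonneg _) (integral_nonneg fun x => sq_nonneg _))
      (integral_nonneg fun x => sqSum_nonneg _))
  have h_diff (x : E3) : DifferentiableAt ℝ f x := hf.contDiffAt.differentiableAt (by simp)
  have h_sq (x : E3) : (1 - a⁻¹ * f x) ^ 2 = a⁻¹ ^ 2 * (f x - a) ^ 2 := by
    field_simp
    ring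
  have h_grad (x : E3) :
      sqSum (grad (fun z => 1 - a⁻¹ * f z) x) = a⁻¹ ^ 2 * sqSum (grad f x) := by
    rw [grad_const_sub, sqSum_neg, grad_mul (differentiableAt_const _) (h_diff x), grad_const,
      smul_zero, add_zero, sqSum_smul]
  have h := hC hρ hK hU hKU (g := fun x => 1 - a⁻¹ * f x)
    (contDiff_const.sub (contDiff_const.mul hf)) fun x hx => by
      rw [h_zero x hx, mul_zero, sub_zero]
  simp only [h_sq, h_grad, integral_const_mul] at h
  calc capa K * a ^ 2 ≤ _ := mul_le_mul_of_nonneg_right h (sq_nonneg a)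
    _ = _ := by field_simp

lemma setIntegral_ball_sq_le (hf : Continuous f) (a : ℝ) {r : ℝ} (hr : 0 ≤ r) :
    ∫ x in ball (0 : E3) r, f x ^ 2 ≤
      2 * (∫ x in ball (0 : E3) r, (f x - a) ^ 2) + 8 / 3 * π * r ^ 3 * a ^ 2 := by
  have h_sub := (integrableOn_ball_of_continuous (by fun_prop : Continuous fun x =>
    (f x - a) ^ 2) 0 r).const_mul 2
  have h_const := integrableOn_ball_of_continuous (continuous_const (y := 2 * a ^ 2)) 0 r
  calc ∫ x in ball (0 : E3) r, f x ^ 2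
      ≤ ∫ x in ball (0 : E3) r, (2 * (f x - a) ^ 2 + 2 * a ^ 2) :=
        integral_mono (integrableOn_ball_of_continuous (by fun_prop) 0 r) (h_sub.add h_const)
          fun x => by simpa only [sub_add_cancel, mul_add] using add_sq_le (a := f x - a) (b := a)
    _ = _ := by
        rw [integral_add h_sub h_const, integral_const_mul, setIntegral_const,
          volume_real_ball 0 hr, smul_eq_mul]
        ring

lemma IsLocalCapaBound.capa_mul_setIntegral_sq_le (hC : IsLocalCapaBound C) (hρ : 0 < ρ)
    (hK : K ⊆ closedBall 0 ρ) (hU : IsOpen U) (hKU : K ⊆ U) (hf : ContDiff ℝ ∞ f)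
    (h_zero : ∀ x ∈ U, f x = 0) :
    capa K * ∫ x in ball (0 : E3) (2 * ρ), f x ^ 2 ≤
      C * (16448 / 3 * π) * ρ ^ 3 * ∫ x in ball (0 : E3) (2 * ρ), sqSum (grad f x) := by
  obtain ⟨a, ha⟩ := exists_setIntegral_sub_sq_le hf 0 (r := 2 * ρ) (by positivity)
  have h_capa := capa_nonneg K
  have h_mean := hC.capa_mul_sq_le hρ hK hU hKU hf h_zero a
  have hC0 := hC.nonneg
  set D := ∫ x in ball (0 : E3) (2 * ρ), (f x - a) ^ 2
  set G := ∫ x in ball (0 : E3) (2 * ρ), sqSum (grad f x)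
  calc capa K * ∫ x in ball (0 : E3) (2 * ρ), f x ^ 2
      ≤ capa K * (2 * D + 8 / 3 * π * (2 * ρ) ^ 3 * a ^ 2) := by
        gcongr
        exact setIntegral_ball_sq_le hf.continuous a (by positivity)
    _ = 2 * (capa K * D) + 8 / 3 * π * (2 * ρ) ^ 3 * (capa K * a ^ 2) := by ring
    _ ≤ 2 * (C * (32 / 3 * π) * ρ * (32 * (2 * ρ) ^ 2 * G)) + 8 / 3 * π * (2 * ρ) ^ 3 *
          (C * (ρ⁻¹ ^ 2 * (32 * (2 * ρ) ^ 2 * G) + G)) := by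
        have h_sq : capa K * a ^ 2 ≤ C * (ρ⁻¹ ^ 2 * (32 * (2 * ρ) ^ 2 * G) + G) :=
          h_mean.trans (by gcongr)
        gcongr
        exact hC.capa_le hρ hK
    _ = C * (16448 / 3 * π) * ρ ^ 3 * G := by
        field_simp
        ring

lemma IsLocalCapaBound.capa_mul_setIntegral_sqSum_le (hC : IsLocalCapaBound C) (hρ : 0 < ρ)
    (hK : K ⊆ closedBall 0 ρ) (hw : ContDiff ℝ ∞ w) (hKw : Disjoint K (tsupport w)) :
    capa K * ∫ x in ball (0 : E3) (2 * ρ), sqSum (w x) ≤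
      C * (16448 / 3 * π) * ρ ^ 3 * ∫ x in ball (0 : E3) (2 * ρ), frobSq (jac w x) := by
  have hw_comp (i : Fin 3) : ContDiff ℝ ∞ fun x => w x i := contDiff_pi.mp hw i
  have h_sq (i : Fin 3) : IntegrableOn (fun x => w x i ^ 2) (ball 0 (2 * ρ)) :=
    integrableOn_ball_of_continuous ((hw_comp i).continuous.pow 2) 0 _
  have h_grad (i : Fin 3) :
      IntegrableOn (fun x => sqSum (grad (fun z => w z i) x)) (ball 0 (2 * ρ)) :=
    integrableOn_ball_of_continuous (continuous_sqSum.comp (continuous_grad (hw_comp i))) 0 _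
  change capa K * ∫ x in ball (0 : E3) (2 * ρ), ∑ i, w x i ^ 2 ≤ C * (16448 / 3 * π) * ρ ^ 3 *
    ∫ x in ball (0 : E3) (2 * ρ), ∑ i, sqSum (grad (fun z => w z i) x)
  rw [integral_finsetSum _ fun i _ => h_sq i, integral_finsetSum _ fun i _ => h_grad i,
    Finset.mul_sum, Finset.mul_sum]
  refine Finset.sum_le_sum fun i _ => hC.capa_mul_setIntegral_sq_le hρ hK
    (isClosed_tsupport w).isOpen_compl hKw.subset_compl_right (hw_comp i) fun x hx => ?_
  rw [image_eq_zero_of_notMem_tsupport hx, Pi.zero_apply]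

end Capacity

section CapacityOfComplement

variable {α c₀ C ρ : ℝ} {Ω : Set E3} {u w : E3 → Fin 3 → ℝ}

lemma IsTestOn.setIntegral_inter_ball_density {a b : ℝ} (hw : IsTestOn Ω w)
    (r : ℝ) : ∫ x in Ω ∩ ball 0 r, density a b w x = ∫ x in ball 0 r, density a b w x :=
  (setIntegral_eq_of_subset_of_forall_sdiff_eq_zero isOpen_ball.measurableSet
    Set.inter_subset_right fun _ hx => density_eq_zero fun h => hx.2 ⟨hw.2.2 h, hx.1⟩).symm

lemma IsLocalCapaBound.capa_mul_scaledEnergy_le_of_isTestOn (hC : IsLocalCapaBound C)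
    (hρ : 0 < ρ) (hw : IsTestOn Ω w) :
    capa (closedBall 0 ρ \ Ω) * scaledEnergy Ω ρ w ≤
      C * (16480 / 3 * π) * ∫ x in Ω ∩ ball 0 (2 * ρ), density 0 1 w x := by
  have h_disjoint : Disjoint (closedBall 0 ρ \ Ω) (tsupport w) :=
    Set.disjoint_sdiff_left.mono_right hw.2.2
  have h_sq : IntegrableOn (fun x => sqSum (w x)) (ball 0 (2 * ρ)) :=
    integrableOn_ball_of_continuous (continuous_sqSum.comp hw.1.continuous) _ _
  have h_frob : IntegrableOn (fun x => frobSq (jac w x)) (ball 0 (2 * ρ)) := by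
    simpa only [density_zero_one] using
      (hw.integrable_density (a := 0) (b := 1)).integrableOn (s := ball 0 (2 * ρ))
  have h_split : scaledEnergy Ω ρ w = ρ⁻¹ ^ 3 * (∫ x in ball 0 (2 * ρ), sqSum (w x)) +
      ρ⁻¹ * ∫ x in ball 0 (2 * ρ), frobSq (jac w x) := by
    rw [scaledEnergy, hw.setIntegral_inter_ball_density, ← integral_const_mul,
      ← integral_const_mul, ← integral_add (h_sq.const_mul _) (h_frob.const_mul _)]
    rfl
  have h_poincare := hC.capa_mul_setIntegral_sqSum_le hρ Set.sdiff_subset hw.1 h_disjoint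
  rw [hw.setIntegral_inter_ball_density, density_zero_one, h_split]
  set V := ∫ x in ball 0 (2 * ρ), sqSum (w x)
  have hG : 0 ≤ ∫ x in ball 0 (2 * ρ), frobSq (jac w x) :=
    integral_nonneg fun x => frobSq_nonneg _
  set G := ∫ x in ball 0 (2 * ρ), frobSq (jac w x)
  calc capa (closedBall 0 ρ \ Ω) * (ρ⁻¹ ^ 3 * V + ρ⁻¹ * G)
      = ρ⁻¹ ^ 3 * (capa (closedBall 0 ρ \ Ω) * V) +
          ρ⁻¹ * (capa (closedBall 0 ρ \ Ω) * G) := by ring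
    _ ≤ ρ⁻¹ ^ 3 * (C * (16448 / 3 * π) * ρ ^ 3 * G) + ρ⁻¹ * (C * (32 / 3 * π) * ρ * G) := by
        gcongr
        exact hC.capa_le hρ Set.sdiff_subset
    _ = C * (16480 / 3 * π) * G := by
        field_simp
        ring

lemma IsLocalCapaBound.capa_mul_scaledEnergy_le (hC : IsLocalCapaBound C) (hρ : 0 < ρ)
    (hΩ : IsOpen Ω) (hu : MemH10 Ω u) :
    capa (closedBall 0 ρ \ Ω) * scaledEnergy Ω ρ u ≤
      4 * (C * (16480 / 3 * π)) * ∫ x in Ω ∩ ball 0 (2 * ρ), frobSq (jac u x) := by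
  have h_meas : MeasurableSet (Ω ∩ ball 0 (2 * ρ)) := (hΩ.inter isOpen_ball).measurableSet
  have hM : 0 ≤ C * (16480 / 3 * π) := mul_nonneg hC.nonneg (by positivity)
  set M := C * (16480 / 3 * π)
  set k := capa (closedBall 0 ρ \ Ω)
  set E := ∫ x in Ω ∩ ball 0 (2 * ρ), frobSq (jac u x)
  have hk : 0 ≤ k := capa_nonneg _
  have h_approx (ε : ℝ) (hε : 0 < ε) : k * scaledEnergy Ω ρ u ≤
      4 * M * E + (4 * M + 2 * (k * (ρ⁻¹ ^ 3 + ρ⁻¹))) * ε := by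
    obtain ⟨w, hw⟩ := hu.exists_isApprox hε
    have h_scaled : scaledEnergy Ω ρ u ≤ 2 * (scaledEnergy Ω ρ w + (ρ⁻¹ ^ 3 + ρ⁻¹) * ε) :=
      hw.setIntegral_density_ge hΩ hu h_meas Set.inter_subset_left (by positivity) (by positivity)
    have h_grad : ∫ x in Ω ∩ ball 0 (2 * ρ), density 0 1 w x ≤ 2 * (E + ε) := by
      simpa only [density_zero_one u, zero_add, one_mul] using
        hw.setIntegral_density_le hΩ hu h_meas Set.inter_subset_left le_rfl zero_le_one
    calc k * scaledEnergy Ω ρ u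
        ≤ k * (2 * (scaledEnergy Ω ρ w + (ρ⁻¹ ^ 3 + ρ⁻¹) * ε)) := by gcongr
      _ = 2 * (k * scaledEnergy Ω ρ w) + 2 * (k * (ρ⁻¹ ^ 3 + ρ⁻¹)) * ε := by ring
      _ ≤ 2 * (M * (2 * (E + ε))) + 2 * (k * (ρ⁻¹ ^ 3 + ρ⁻¹)) * ε := by
          have h_test := hC.capa_mul_scaledEnergy_le_of_isTestOn hρ hw.test
          gcongr 2 * ?_ + _
          exact h_test.trans (by gcongr)
      _ = _ := by ring
  have h_limit : Tendsto (fun ε => 4 * M * E + (4 * M + 2 * (k * (ρ⁻¹ ^ 3 + ρ⁻¹))) * ε)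
      (nhdsWithin 0 (Set.Ioi 0)) (nhds (4 * M * E)) :=
    (Continuous.tendsto' (by fun_prop) _ _ (by ring)).mono_left nhdsWithin_le_nhds
  exact ge_of_tendsto h_limit (eventually_mem_nhdsWithin.mono h_approx)

theorem exists_capa_mul_sqSum_le (hc₀ : 0 < c₀) (hQPD : QPDhyp α c₀) :
    ∃ C, 0 ≤ C ∧ ∀ ⦃Ω ρ u⦄, IsLocalSolution α Ω ρ u → ∀ ⦃y⦄, y ∈ Ω → ‖y‖ < ρ / 2 →
      capa (closedBall 0 ρ \ Ω) * sqSum (u y) ≤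
        C * ∫ x in Ω ∩ ball 0 (2 * ρ), frobSq (jac u x) := by
  obtain ⟨A, hA, h_energy⟩ := exists_sqSum_add_weightedEnergy_le hc₀ hQPD
  obtain ⟨B, hB⟩ := exists_isLocalCapaBound
  have hB0 := hB.nonneg
  refine ⟨A * (4 * (B * (16480 / 3 * π))), by positivity, fun Ω ρ u hu y hyΩ hyρ => ?_⟩
  have hρ := hu.radius_pos
  have h_capa := capa_nonneg (closedBall 0 ρ \ Ω)
  have h_point : sqSum (u y) ≤ A * scaledEnergy Ω ρ u :=
    (le_add_of_nonneg_right (mul_nonneg hc₀.le (weightedEnergy_nonneg hρ.le))).trans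
      (h_energy hu hyΩ hyρ hρ (by linarith))
  calc capa (closedBall 0 ρ \ Ω) * sqSum (u y)
      ≤ capa (closedBall 0 ρ \ Ω) * (A * scaledEnergy Ω ρ u) := by gcongr
    _ = A * (capa (closedBall 0 ρ \ Ω) * scaledEnergy Ω ρ u) := by ring
    _ ≤ A * (4 * (B * (16480 / 3 * π)) * ∫ x in Ω ∩ ball 0 (2 * ρ), frobSq (jac u x)) :=
        mul_le_mul_of_nonneg_left (hB.capa_mul_scaledEnergy_le hρ hu.isOpen hu.memH10) hA
    _ = _ := by ring

end CapacityOfComplement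

/-! ### The Wiener integral -/

section WeightedIntegrals

lemma integrable_of_tendsto_of_integral_le {X : Type*} [MeasurableSpace X] {μ : Measure X}
    {g : ℕ → X → ℝ} {f : X → ℝ} {M : ℝ} (hg : ∀ n, Integrable (g n) μ)
    (h_nonneg : ∀ n x, 0 ≤ g n x) (h_le : ∀ n, ∫ x, g n x ∂μ ≤ M)
    (h_lim : ∀ᵐ x ∂μ, Tendsto (fun n => g n x) atTop (nhds (f x))) : Integrable f μ := by
  refine ⟨aestronglyMeasurable_of_tendsto_ae _ (fun n => (hg n).1) h_lim, ?_⟩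
  calc ∫⁻ x, ‖f x‖ₑ ∂μ = ∫⁻ x, liminf (fun n => ‖g n x‖ₑ) atTop ∂μ :=
        lintegral_congr_ae (h_lim.mono fun x hx => hx.enorm.liminf_eq.symm)
    _ ≤ liminf (fun n => ∫⁻ x, ‖g n x‖ₑ ∂μ) atTop :=
        lintegral_liminf_le' fun n => (hg n).1.enorm
    _ ≤ liminf (fun _ => ENNReal.ofReal M) atTop := by
        refine liminf_le_liminf (Eventually.of_forall fun n => ?_)
        simp_rw [fun x => Real.enorm_of_nonneg (h_nonneg n x)]
        rw [← ofReal_integral_eq_lintegral_ofReal (hg n) (ae_of_all _ (h_nonneg n))]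
        exact ENNReal.ofReal_le_ofReal (h_le n)
    _ < ⊤ := by simp

lemma lintegral_Ioi_inv_sq {c : ℝ} (hc : 0 < c) :
    ∫⁻ ρ in Set.Ioi c, ENNReal.ofReal (ρ ^ 2)⁻¹ = ENNReal.ofReal c⁻¹ := by
  have h_rpow : Set.EqOn (fun ρ => (ρ ^ 2)⁻¹) (fun ρ : ℝ => ρ ^ (-2 : ℝ)) (Set.Ioi c) :=
    fun ρ hρ => by
      change (ρ ^ 2)⁻¹ = ρ ^ (-2 : ℝ)
      rw [Real.rpow_neg (hc.trans hρ).le, Real.rpow_two]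
  rw [← ofReal_integral_eq_lintegral_ofReal
      ((integrableOn_Ioi_rpow_of_lt (by norm_num) hc).congr_fun h_rpow.symm measurableSet_Ioi)
      (ae_of_all _ fun ρ => by positivity),
    setIntegral_congr_fun measurableSet_Ioi h_rpow, integral_Ioi_rpow_of_lt (by norm_num) hc]
  norm_num [Real.rpow_neg_one]

variable {X : Type*} [NormedAddCommGroup X]

lemma lintegral_inv_sq_mul_indicator_ball (g : X → ENNReal) {c : ℝ} (hc : 0 < c) {x : X}
    (hx : x ≠ 0) :
    ∫⁻ ρ in Set.Ioi 0, ENNReal.ofReal (ρ ^ 2)⁻¹ * (ball 0 (c * ρ)).indicator g x =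
      ENNReal.ofReal c * (ENNReal.ofReal ‖x‖⁻¹ * g x) := by
  have h_pos : 0 < ‖x‖ / c := div_pos (norm_pos_iff.mpr hx) hc
  have h_indicator (ρ : ℝ) : ENNReal.ofReal (ρ ^ 2)⁻¹ * (ball 0 (c * ρ)).indicator g x =
      (Set.Ioi (‖x‖ / c)).indicator (fun ρ => ENNReal.ofReal (ρ ^ 2)⁻¹ * g x) ρ := by
    simp only [Set.indicator, mem_ball_zero_iff, Set.mem_Ioi, div_lt_iff₀' hc, mul_ite, mul_zero]
  simp only [h_indicator]
  rw [setLIntegral_indicator measurableSet_Ioi,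
    Set.inter_eq_left.mpr (Set.Ioi_subset_Ioi h_pos.le),
    lintegral_mul_const'' _ (by fun_prop), lintegral_Ioi_inv_sq h_pos, inv_div, div_eq_mul_inv,
    ENNReal.ofReal_mul hc.le, mul_assoc]

variable [MeasurableSpace X] [OpensMeasurableSpace X] {μ : Measure X} [NullSingletonClass μ]
  [SFinite μ]

lemma lintegral_inv_sq_mul_setLIntegral_ball {g : X → ENNReal} (hg : AEMeasurable g μ)
    {c : ℝ} (hc : 0 < c) :
    ∫⁻ ρ in Set.Ioi 0, ENNReal.ofReal (ρ ^ 2)⁻¹ * (∫⁻ x in ball 0 (c * ρ), g x ∂μ) =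
      ENNReal.ofReal c * ∫⁻ x, ENNReal.ofReal ‖x‖⁻¹ * g x ∂μ := by
  have h_measurable : MeasurableSet {q : ℝ × X | ‖q.2‖ < c * q.1} :=
    measurableSet_lt (by fun_prop) (by fun_prop)
  have h_joint : AEMeasurable
      (fun q : ℝ × X => ENNReal.ofReal (q.1 ^ 2)⁻¹ * (ball 0 (c * q.1)).indicator g q.2)
      ((volume.restrict (Set.Ioi 0)).prod μ) := by
    have h_indicator : (fun q : ℝ × X => (ball 0 (c * q.1)).indicator g q.2) =
        {q | ‖q.2‖ < c * q.1}.indicator fun q => g q.2 := by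
      funext q
      simp only [Set.indicator, mem_ball_zero_iff, Set.mem_ofPred_eq]
    refine (by fun_prop : Measurable fun q : ℝ × X => _).aemeasurable.mul ?_
    rw [h_indicator]
    exact hg.comp_snd.indicator h_measurable
  simp_rw [← lintegral_indicator isOpen_ball.measurableSet,
    ← lintegral_const_mul' _ _ ENNReal.ofReal_ne_top]
  rw [lintegral_lintegral_swap h_joint]
  exact lintegral_congr_ae ((Measure.ae_ne μ 0).mono fun x hx =>
    lintegral_inv_sq_mul_indicator_ball g hc hx)

lemma setLIntegral_div_sq_lt_top {f : X → ℝ} {κ : ℝ → ℝ} {c M r : ℝ} (hc : 0 < c)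
    (h_nonneg : ∀ x, 0 ≤ f x) (hf : Integrable f μ) (h_weight : Integrable (fun x => ‖x‖⁻¹ * f x) μ)
    (hκ : ∀ ρ ∈ Set.Ioc 0 r, κ ρ ≤ M * ∫ x in ball 0 (c * ρ), f x ∂μ) :
    ∫⁻ ρ in Set.Ioc 0 r, ENNReal.ofReal (κ ρ / ρ ^ 2) < ⊤ := by
  have h_bound (ρ : ℝ) (hρ : ρ ∈ Set.Ioc 0 r) : ENNReal.ofReal (κ ρ / ρ ^ 2) ≤
      ENNReal.ofReal M * (ENNReal.ofReal (ρ ^ 2)⁻¹ *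
        ∫⁻ x in ball 0 (c * ρ), ENNReal.ofReal (f x) ∂μ) := by
    rw [← ofReal_integral_eq_lintegral_ofReal hf.integrableOn (ae_of_all _ h_nonneg),
      mul_left_comm, ← ENNReal.ofReal_mul' (integral_nonneg h_nonneg),
      ← ENNReal.ofReal_mul (by positivity), inv_mul_eq_div]
    gcongr
    exact hκ ρ hρ
  calc ∫⁻ ρ in Set.Ioc 0 r, ENNReal.ofReal (κ ρ / ρ ^ 2)
      ≤ ∫⁻ ρ in Set.Ioc 0 r, ENNReal.ofReal M * (ENNReal.ofReal (ρ ^ 2)⁻¹ *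
          ∫⁻ x in ball 0 (c * ρ), ENNReal.ofReal (f x) ∂μ) :=
        setLIntegral_mono' measurableSet_Ioc h_bound
    _ ≤ ∫⁻ ρ in Set.Ioi 0, ENNReal.ofReal M * (ENNReal.ofReal (ρ ^ 2)⁻¹ *
          ∫⁻ x in ball 0 (c * ρ), ENNReal.ofReal (f x) ∂μ) :=
        lintegral_mono_set Set.Ioc_subset_Ioi_self
    _ = ENNReal.ofReal M * (ENNReal.ofReal c * ∫⁻ x, ENNReal.ofReal (‖x‖⁻¹ * f x) ∂μ) := by
        simp_rw [fun x : X => ENNReal.ofReal_mul (q := f x) (inv_nonneg.mpr (norm_nonneg x))]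
        rw [lintegral_const_mul' _ _ ENNReal.ofReal_ne_top,
          lintegral_inv_sq_mul_setLIntegral_ball hf.1.aemeasurable.ennreal_ofReal hc]
    _ < ⊤ := ENNReal.mul_lt_top ENNReal.ofReal_lt_top
        (ENNReal.mul_lt_top ENNReal.ofReal_lt_top h_weight.lintegral_lt_top)

end WeightedIntegrals

section Regularity

variable {α c₀ r : ℝ} {Ω : Set E3} {u : E3 → Fin 3 → ℝ}

lemma IsLocalSolution.mono_radius {ρ : ℝ} (hu : IsLocalSolution α Ω r u) (hρ : 0 < ρ)
    (hρr : ρ ≤ r) : IsLocalSolution α Ω ρ u :=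
  ⟨hu.isOpen, hu.memH10, hρ, fun x hx =>
    hu.lame_eq_zero x ⟨hx.1, ball_subset_ball (by linarith) hx.2⟩⟩

lemma IsLocalSolution.integrableOn_inv_norm_mul_frobSq (hc₀ : 0 < c₀) (hQPD : QPDhyp α c₀)
    (hu : IsLocalSolution α Ω r u) (h0 : (0 : E3) ∈ closure Ω) :
    IntegrableOn (fun x => ‖x‖⁻¹ * frobSq (jac u x)) (Ω ∩ ball 0 r) := by
  obtain ⟨C, -, h_energy⟩ := exists_sqSum_add_weightedEnergy_le hc₀ hQPD
  have h_bound (n : ℕ) :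
      weightedEnergy Ω r (1 / ((n : ℝ) + 1)) u ≤ C * scaledEnergy Ω r u / c₀ := by
    have hδ : 0 < 1 / ((n : ℝ) + 1) := Nat.one_div_pos_of_nat
    obtain ⟨y, hyΩ, hy⟩ := Metric.mem_closure_iff.mp h0 (min (1 / ((n : ℝ) + 1)) (r / 2))
      (lt_min hδ (half_pos hu.radius_pos))
    rw [dist_zero_left, lt_min_iff] at hy
    rw [le_div_iff₀' hc₀]
    exact (le_add_of_nonneg_left (sqSum_nonneg _)).trans (h_energy hu hyΩ hy.2 hδ hy.1.le)
  refine integrable_of_tendsto_of_integral_le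
    (fun n => (hu.memH10.integrableOn_frobSq_mul_inv hu.isOpen Nat.one_div_pos_of_nat).mono_set
      Set.inter_subset_left)
    (fun n x => mul_nonneg (frobSq_nonneg _) (by positivity)) h_bound ?_
  filter_upwards [Measure.ae_ne _ 0] with x hx
  have h_denom : Tendsto (fun n : ℕ => ‖x‖ + 1 / ((n : ℝ) + 1)) atTop (nhds ‖x‖) := by
    simpa only [add_zero] using tendsto_one_div_add_atTop_nhds_zero_nat.const_add ‖x‖
  rw [mul_comm]
  exact (h_denom.inv₀ (norm_ne_zero_iff.mpr hx)).const_mul _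

lemma IsLocalSolution.setLIntegral_capa_div_sq_lt_top (hc₀ : 0 < c₀) (hQPD : QPDhyp α c₀)
    (hu : IsLocalSolution α Ω r u) (h0 : (0 : E3) ∈ closure Ω) {M : ℝ}
    (h_capa : ∀ ρ ∈ Set.Ioc 0 (r / 2), capa (closedBall (0 : E3) ρ \ Ω) ≤
      M * ∫ x in Ω ∩ ball 0 (2 * ρ), frobSq (jac u x)) :
    ∫⁻ ρ in Set.Ioc 0 (r / 2), ENNReal.ofReal (capa (closedBall (0 : E3) ρ \ Ω) / ρ ^ 2) < ⊤ := by
  refine setLIntegral_div_sq_lt_top (μ := volume.restrict (Ω ∩ ball 0 r)) (M := M) two_pos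
    (fun x => frobSq_nonneg (jac u x))
    ((hu.memH10.integrableOn_frobSq hu.isOpen).mono_set Set.inter_subset_left)
    (hu.integrableOn_inv_norm_mul_frobSq hc₀ hQPD h0) fun ρ hρ => ?_
  have h_ball : ball (0 : E3) (2 * ρ) ∩ (Ω ∩ ball 0 r) = Ω ∩ ball 0 (2 * ρ) := by
    rw [Set.inter_left_comm, Set.inter_eq_left.mpr (ball_subset_ball (by linarith [hρ.2]))]
  rw [Measure.restrict_restrict isOpen_ball.measurableSet, h_ball]
  exact h_capa ρ hρ

lemma setLIntegral_Ioc_capa_div_sq_lt_top (Ω : Set E3) {a : ℝ} (ha : 0 < a) (b : ℝ) :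
    ∫⁻ ρ in Set.Ioc a b, ENNReal.ofReal (capa (closedBall (0 : E3) ρ \ Ω) / ρ ^ 2) < ⊤ := by
  obtain ⟨C, hC⟩ := exists_isLocalCapaBound
  have hC0 := hC.nonneg
  have h_bound (ρ : ℝ) (hρ : ρ ∈ Set.Ioc a b) :
      capa (closedBall (0 : E3) ρ \ Ω) / ρ ^ 2 ≤ C * (32 / 3 * π) / a := by
    have hρ0 : 0 < ρ := ha.trans hρ.1
    calc capa (closedBall (0 : E3) ρ \ Ω) / ρ ^ 2 ≤ C * (32 / 3 * π) * ρ / ρ ^ 2 := by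
          gcongr
          exact hC.capa_le hρ0 Set.sdiff_subset
      _ = C * (32 / 3 * π) / ρ := by field_simp
      _ ≤ C * (32 / 3 * π) / a := by
          gcongr
          exact hρ.1.le
  calc _ ≤ ∫⁻ _ in Set.Ioc a b, ENNReal.ofReal (C * (32 / 3 * π) / a) :=
        setLIntegral_mono' measurableSet_Ioc fun ρ hρ => ENNReal.ofReal_le_ofReal (h_bound ρ hρ)
    _ < ⊤ := by
        rw [setLIntegral_const]
        exact ENNReal.mul_lt_top ENNReal.ofReal_lt_top measure_Ioc_lt_top

lemma IsLocalSolution.exists_sqSum_lt (hc₀ : 0 < c₀) (hQPD : QPDhyp α c₀)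
    (hu : IsLocalSolution α Ω r u) (h0 : (0 : E3) ∈ closure Ω)
    (hWiener : ∫⁻ ρ in Set.Ioc (0 : ℝ) 1,
      ENNReal.ofReal (capa (closedBall (0 : E3) ρ \ Ω) / ρ ^ 2) = ⊤) {ε : ℝ} (hε : 0 < ε) :
    ∃ ρ, 0 < ρ ∧ ∀ y ∈ Ω, ‖y‖ < ρ → sqSum (u y) < ε := by
  by_contra! h_large
  have hr := hu.radius_pos
  obtain ⟨C, -, h_decay⟩ := exists_capa_mul_sqSum_le hc₀ hQPD
  have h_capa (ρ : ℝ) (hρ : ρ ∈ Set.Ioc 0 (r / 2)) : capa (closedBall (0 : E3) ρ \ Ω) ≤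
      C / ε * ∫ x in Ω ∩ ball 0 (2 * ρ), frobSq (jac u x) := by
    obtain ⟨y, hyΩ, hy, hyε⟩ := h_large (ρ / 2) (half_pos hρ.1)
    rw [div_mul_eq_mul_div, le_div_iff₀ hε]
    exact (mul_le_mul_of_nonneg_left hyε (capa_nonneg _)).trans
      (h_decay (hu.mono_radius hρ.1 (by linarith [hρ.2])) hyΩ hy)
  refine hWiener.not_lt ?_
  calc ∫⁻ ρ in Set.Ioc (0 : ℝ) 1, ENNReal.ofReal (capa (closedBall (0 : E3) ρ \ Ω) / ρ ^ 2)
      ≤ ∫⁻ ρ in Set.Ioc 0 (r / 2) ∪ Set.Ioc (r / 2) 1,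
          ENNReal.ofReal (capa (closedBall (0 : E3) ρ \ Ω) / ρ ^ 2) :=
        lintegral_mono_set Set.Ioc_subset_Ioc_union_Ioc
    _ ≤ _ := lintegral_union_le _ _ _
    _ < ⊤ := ENNReal.add_lt_top.mpr
        ⟨hu.setLIntegral_capa_div_sq_lt_top hc₀ hQPD h0 h_capa,
          setLIntegral_Ioc_capa_div_sq_lt_top Ω (half_pos hr) 1⟩

theorem lame_wiener_criterion_regularity_general (hΩ : IsOpen Ω) (hc₀ : 0 < c₀)
    (hQPD : QPDhyp α c₀)
    (hWiener : ∫⁻ ρ in Set.Ioc (0 : ℝ) 1,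
      ENNReal.ofReal (capa (closedBall (0 : E3) ρ \ Ω) / ρ ^ 2) = ⊤)
    (hu : MemH10 Ω u) (hLu : ∀ᶠ x in nhdsWithin 0 Ω, lame α u x = 0) :
    Tendsto u (nhdsWithin 0 Ω) (nhds 0) := by
  by_cases h0 : (0 : E3) ∈ closure Ω
  swap
  · rw [notMem_closure_iff_nhdsWithin_eq_bot.mp h0]
    exact tendsto_bot
  obtain ⟨R, hR, h_ball⟩ := Metric.eventually_nhds_iff_ball.mp (eventually_nhdsWithin_iff.mp hLu)
  have h_local : IsLocalSolution α Ω (R / 2) u :=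
    ⟨hΩ, hu, half_pos hR, fun x hx =>
      h_ball x (by simpa only [mul_div_cancel₀ R two_ne_zero] using hx.2) hx.1⟩
  refine tendsto_pi_nhds.mpr fun i => Metric.tendsto_nhdsWithin_nhds.mpr fun ε hε => ?_
  obtain ⟨ρ, hρ, h_small⟩ := h_local.exists_sqSum_lt hc₀ hQPD h0 hWiener (pow_pos hε 2)
  refine ⟨ρ, hρ, fun x hx hxρ => ?_⟩
  rw [dist_zero_right] at hxρ
  rw [Pi.zero_apply, dist_zero_right, Real.norm_eq_abs]
  exact abs_lt_of_sq_lt_sq ((sq_le_sqSum (u x) i).trans_lt (h_small x hx hxρ)) hε.le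

end Regularity

/-- Under (QPD), divergence of the Wiener integral at a boundary point `O = 0`
implies regularity of `O` with respect to the Lamé system: solutions of `Lu = f`,
`f ∈ C₀^∞(Ω;ℝ³)`, `u ∈ H̊¹(Ω;ℝ³)`, tend to `0` at `O`. -/
theorem lame_wiener_criterion_regularity
    (Ω : Set E3) (hΩ : IsOpen Ω) (h0 : (0 : E3) ∈ frontier Ω)
    (α : ℝ) (hα : -1 < α) (c₀ : ℝ) (hc₀ : 0 < c₀) (hQPD : QPDhyp α c₀)
    (hWiener : ∫⁻ ρ in Set.Ioc (0 : ℝ) 1,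
      ENNReal.ofReal (capa (closedBall (0 : E3) ρ \ Ω) / ρ ^ 2) = ⊤) :
    ∀ f : E3 → Fin 3 → ℝ, IsTestOn Ω f →
    ∀ u : E3 → Fin 3 → ℝ, MemH10 Ω u →
    (∀ x ∈ Ω, ∀ i, lame α u x i = f x i) →
    Tendsto u (nhdsWithin (0 : E3) Ω) (nhds 0) := by
  intro f hf u hu hLu
  have h_zero : (0 : E3) ∉ tsupport f := fun h => (hΩ.frontier_eq ▸ h0).2 (hf.2.2 h)
  refine lame_wiener_criterion_regularity_general hΩ hc₀ hQPD hWiener hu ?_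
  filter_upwards [self_mem_nhdsWithin,
    mem_nhdsWithin_of_mem_nhds (notMem_tsupport_iff_eventuallyEq.mp h_zero)] with x hx hfx
  exact funext fun i => (hLu x hx i).trans (congrFun hfx i)
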